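/- arXiv:2503.02136 — 8 statements merged into one kernel-verified Lean document; each statement's English description precedes it below -/
import Mathlib

section
/- If there exists a strong Gallai-Schur r-coloring of [1, m], then there exists a strong Gallai-Schur (r+1)-coloring of [1, 2m+1]. Explicitly, such a coloring is obtained by giving all odd numbers in [1, 2m+1] a new color and giving each even number 2x the color that x had in the original coloring. -/
/-- A strong Gallai–Schur coloring of the interval `[1, m]` with color set `C`:
`χ` maps `[1, m]` into `C`, is surjective onto `C`, admits no monochromatic
solution of `a + b = c` (with `a = b` allowed), and admits no rainbow solution
of `a + b = c`. -/
def StrongGS (m : ℕ) (C : Finset ℕ) (χ : ℕ → ℕ) : Prop :=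
  (∀ x ∈ Finset.Icc 1 m, χ x ∈ C) ∧
  (∀ i ∈ C, ∃ x ∈ Finset.Icc 1 m, χ x = i) ∧
  (∀ a ∈ Finset.Icc 1 m, ∀ b ∈ Finset.Icc 1 m, ∀ c ∈ Finset.Icc 1 m,
      a + b = c → ¬(χ a = χ b ∧ χ b = χ c)) ∧
  (∀ a ∈ Finset.Icc 1 m, ∀ b ∈ Finset.Icc 1 m, ∀ c ∈ Finset.Icc 1 m,
      a + b = c → ¬(χ a ≠ χ b ∧ χ a ≠ χ c ∧ χ b ≠ χ c))

/-!
A sum `a + b = c` has either no odd term or exactly two. With no odd term it is twice a sum in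
`[1, m]`, so it inherits the absence of monochromatic and rainbow solutions from `χ`. With two odd
terms, these share the new color, so the sum is not rainbow, and the even term has an old color,
so the sum is not monochromatic.
-/

/-- The 2-fold construction: the coloring that gives odd numbers the color `k` and gives `2 * x` the
color that `x` has under `χ`. -/
def twofoldColoring {α : Type*} (k : α) (χ : ℕ → α) : ℕ → α :=
  fun x => if Odd x then k else χ (x / 2)

/-- The coloring `χ` of `[1, m]` has no monochromatic solution of `a + b = c`. The variable `c` is
eliminated, so only the bound `a + b ≤ m` remains. -/
def NoMonochromaticSum {α : Type*} (m : ℕ) (χ : ℕ → α) : Prop :=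
  ∀ a b, 0 < a → 0 < b → a + b ≤ m → ¬(χ a = χ b ∧ χ b = χ (a + b))

/-- The coloring `χ` of `[1, m]` has no rainbow solution of `a + b = c`, with `c` eliminated as in
`NoMonochromaticSum`. -/
def NoRainbowSum {α : Type*} (m : ℕ) (χ : ℕ → α) : Prop :=
  ∀ a b, 0 < a → 0 < b → a + b ≤ m → ¬(χ a ≠ χ b ∧ χ a ≠ χ (a + b) ∧ χ b ≠ χ (a + b))

theorem forall_mem_Icc_add_eq_iff {m : ℕ} {P : ℕ → ℕ → ℕ → Prop} :
    (∀ a ∈ Finset.Icc 1 m, ∀ b ∈ Finset.Icc 1 m, ∀ c ∈ Finset.Icc 1 m, a + b = c → P a b c) ↔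
      ∀ a b, 0 < a → 0 < b → a + b ≤ m → P a b (a + b) := by
  simp only [Finset.mem_Icc]
  constructor
  · intro h a b ha hb hab
    exact h a (by lia) b (by lia) (a + b) (by lia) rfl
  · rintro h a ⟨ha, -⟩ b ⟨hb, -⟩ _ ⟨-, hab⟩ rfl
    exact h a b ha hb hab

theorem strongGS_iff {m : ℕ} {C : Finset ℕ} {χ : ℕ → ℕ} :
    StrongGS m C χ ↔
      χ '' Set.Icc 1 m = C ∧ NoMonochromaticSum m χ ∧ NoRainbowSum m χ := by
  have image_eq_iff : χ '' Set.Icc 1 m = C ↔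
      (∀ x ∈ Finset.Icc 1 m, χ x ∈ C) ∧ ∀ i ∈ C, ∃ x ∈ Finset.Icc 1 m, χ x = i := by
    rw [Set.Subset.antisymm_iff, Set.image_subset_iff, ← Finset.coe_Icc]
    rfl
  rw [StrongGS, forall_mem_Icc_add_eq_iff, forall_mem_Icc_add_eq_iff, image_eq_iff, and_assoc]
  rfl

section Twofold

variable {α : Type*} {m : ℕ} {k : α} {χ : ℕ → α}

@[simp]
theorem twofoldColoring_two_mul (k : α) (χ : ℕ → α) (x : ℕ) :
    twofoldColoring k χ (2 * x) = χ x := by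
  simp [twofoldColoring]

@[simp]
theorem twofoldColoring_two_mul_add_one (k : α) (χ : ℕ → α) (x : ℕ) :
    twofoldColoring k χ (2 * x + 1) = k := by
  simp [twofoldColoring]

theorem image_twofoldColoring (m : ℕ) (k : α) (χ : ℕ → α) :
    twofoldColoring k χ '' Set.Icc 1 (2 * m + 1) = insert k (χ '' Set.Icc 1 m) := by
  apply Set.Subset.antisymm
  · rintro _ ⟨x, ⟨hx, hxm⟩, rfl⟩
    obtain ⟨y, rfl | rfl⟩ := x.even_or_odd'
    · rw [twofoldColoring_two_mul]
      exact Or.inr ⟨y, ⟨by lia, by lia⟩, rfl⟩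
    · exact Or.inl (twofoldColoring_two_mul_add_one k χ y)
  · rintro _ (rfl | ⟨y, ⟨hy, hym⟩, rfl⟩)
    · exact ⟨1, ⟨le_rfl, by lia⟩, twofoldColoring_two_mul_add_one _ χ 0⟩
    · exact ⟨2 * y, ⟨by lia, by lia⟩, twofoldColoring_two_mul k χ y⟩

theorem NoMonochromaticSum.twofoldColoring (h : NoMonochromaticSum m χ)
    (hk : k ∉ χ '' Set.Icc 1 m) :
    NoMonochromaticSum (2 * m + 1) (twofoldColoring k χ) := by
  have ne_new (x : ℕ) (hx : 0 < x) (hxm : x ≤ m) : χ x ≠ k :=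
    fun hxk => hk ⟨x, ⟨hx, hxm⟩, hxk⟩
  rintro a b ha hb hab ⟨hχab, hχbc⟩
  obtain ⟨x, rfl | rfl⟩ := a.even_or_odd' <;> obtain ⟨y, rfl | rfl⟩ := b.even_or_odd'
  · rw [← mul_add] at hχbc
    simp only [twofoldColoring_two_mul] at hχab hχbc
    exact h x y (by lia) (by lia) (by lia) ⟨hχab, hχbc⟩
  · simp only [twofoldColoring_two_mul, twofoldColoring_two_mul_add_one] at hχab
    exact ne_new x (by lia) (by lia) hχab
  · simp only [twofoldColoring_two_mul, twofoldColoring_two_mul_add_one] at hχab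
    exact ne_new y (by lia) (by lia) hχab.symm
  · rw [show 2 * x + 1 + (2 * y + 1) = 2 * (x + y + 1) by ring] at hχbc
    simp only [twofoldColoring_two_mul, twofoldColoring_two_mul_add_one] at hχbc
    exact ne_new (x + y + 1) (by lia) (by lia) hχbc.symm

theorem NoRainbowSum.twofoldColoring (h : NoRainbowSum m χ) (k : α) :
    NoRainbowSum (2 * m + 1) (twofoldColoring k χ) := by
  rintro a b ha hb hab ⟨hχab, hχac, hχbc⟩
  obtain ⟨x, rfl | rfl⟩ := a.even_or_odd' <;> obtain ⟨y, rfl | rfl⟩ := b.even_or_odd'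
  · rw [← mul_add] at hχac hχbc
    simp only [twofoldColoring_two_mul] at hχab hχac hχbc
    exact h x y (by lia) (by lia) (by lia) ⟨hχab, hχac, hχbc⟩
  · rw [← add_assoc, ← mul_add] at hχbc
    simp only [twofoldColoring_two_mul_add_one, ne_eq, not_true_eq_false] at hχbc
  · rw [add_right_comm, ← mul_add] at hχac
    simp only [twofoldColoring_two_mul_add_one, ne_eq, not_true_eq_false] at hχac
  · simp only [twofoldColoring_two_mul_add_one, ne_eq, not_true_eq_false] at hχab

end Twofold

theorem strong_twofold_general {m k : ℕ} {C : Finset ℕ} {χ : ℕ → ℕ} (h : StrongGS m C χ)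
    (hk : k ∉ C) : StrongGS (2 * m + 1) (insert k C) (twofoldColoring k χ) := by
  obtain ⟨himage, hmono, hrainbow⟩ := strongGS_iff.mp h
  refine strongGS_iff.mpr ⟨?_, hmono.twofoldColoring ?_, hrainbow.twofoldColoring k⟩
  · rw [image_twofoldColoring, himage, Finset.coe_insert]
  · rwa [himage, Finset.mem_coe]

/-- **2-fold construction, strong case.** If there is a strong Gallai–Schur
`r`-coloring of `[1, m]`, then there is a strong Gallai–Schur `(r+1)`-coloring
of `[1, 2m+1]`; explicitly, one obtained by giving all odd numbers the new
color `r + 1` and giving each even number `2x` the color that `x` had. -/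
theorem strong_twofold (m r : ℕ) (hm : 1 ≤ m) (hr : 1 ≤ r) (χ : ℕ → ℕ)
    (h : StrongGS m (Finset.Icc 1 r) χ) :
    (∃ χ' : ℕ → ℕ, StrongGS (2 * m + 1) (Finset.Icc 1 (r + 1)) χ') ∧
    StrongGS (2 * m + 1) (Finset.Icc 1 (r + 1))
      (fun x => if Odd x then r + 1 else χ (x / 2)) := by
  have htwofold := strong_twofold_general h (k := r + 1) (by simp)
  rw [Finset.insert_Icc_right_eq_Icc_add_one (by lia)] at htwofold
  exact ⟨⟨_, htwofold⟩, htwofold⟩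
end

section
/- If there exists a weak Gallai-Schur r-coloring of [1, m], then there exists a weak Gallai-Schur (r+1)-coloring of [1, 2m+1]. Explicitly, such a coloring is obtained by giving all odd numbers in [1, 2m+1] a new color and giving each even number 2x the color that x had in the original coloring. -/
/-- A weak Gallai–Schur coloring of the interval `[1, m]` with color set `C`:
`χ` maps `[1, m]` into `C`, is surjective onto `C`, admits no monochromatic
solution of `a + b = c` with `a`, `b`, `c` pairwise distinct, and admits no
rainbow solution of `a + b = c`. -/
def WeakGS (m : ℕ) (C : Finset ℕ) (χ : ℕ → ℕ) : Prop :=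
  (∀ x ∈ Finset.Icc 1 m, χ x ∈ C) ∧
  (∀ i ∈ C, ∃ x ∈ Finset.Icc 1 m, χ x = i) ∧
  (∀ a ∈ Finset.Icc 1 m, ∀ b ∈ Finset.Icc 1 m, ∀ c ∈ Finset.Icc 1 m,
      a + b = c → a ≠ b → a ≠ c → b ≠ c → ¬(χ a = χ b ∧ χ b = χ c)) ∧
  (∀ a ∈ Finset.Icc 1 m, ∀ b ∈ Finset.Icc 1 m, ∀ c ∈ Finset.Icc 1 m,
      a + b = c → ¬(χ a ≠ χ b ∧ χ a ≠ χ c ∧ χ b ≠ χ c))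

/-!
In an equation `a + b = c` the number of odd terms is `0` or `2`. If all terms are even, halving
them gives an equation in the original coloring. If exactly two terms are odd, these two have the
new color and the third does not, so the equation is neither monochromatic nor rainbow.
-/

section Twofold

variable {α : Type*} {q : α} {χ : ℕ → α} {m a b x : ℕ}

/-- The 2-fold extension of the coloring `χ` by the color `q`: odd numbers get the color `q`, and
`2 * x` gets the color of `x`. -/
def twofold (q : α) (χ : ℕ → α) (x : ℕ) : α :=
  if Odd x then q else χ (x / 2)

theorem twofold_of_odd (hx : Odd x) : twofold q χ x = q :=
  if_pos hx

theorem twofold_two_mul (q : α) (χ : ℕ → α) (x : ℕ) : twofold q χ (2 * x) = χ x := by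
  simp [twofold]

theorem two_mul_mem_Icc_iff : 2 * x ∈ Finset.Icc 1 (2 * m + 1) ↔ x ∈ Finset.Icc 1 m := by
  simp only [Finset.mem_Icc]
  omega

theorem image_twofold [DecidableEq α] (q : α) (χ : ℕ → α) (m : ℕ) :
    (Finset.Icc 1 (2 * m + 1)).image (twofold q χ) = insert q ((Finset.Icc 1 m).image χ) := by
  ext i
  simp only [Finset.mem_insert, Finset.mem_image]
  constructor
  · rintro ⟨x, hx, rfl⟩
    rcases x.even_or_odd' with ⟨y, rfl | rfl⟩
    · exact .inr ⟨y, two_mul_mem_Icc_iff.mp hx, (twofold_two_mul q χ y).symm⟩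
    · exact .inl (twofold_of_odd (odd_two_mul_add_one y))
  · rintro (rfl | ⟨x, hx, rfl⟩)
    · exact ⟨1, by simp, twofold_of_odd odd_one⟩
    · exact ⟨2 * x, two_mul_mem_Icc_iff.mpr hx, twofold_two_mul q χ x⟩

theorem twofold_eq_iff_odd (hq : ∀ y ∈ Finset.Icc 1 m, χ y ≠ q)
    (hx : x ∈ Finset.Icc 1 (2 * m + 1)) : twofold q χ x = q ↔ Odd x := by
  refine ⟨fun hxq ↦ ?_, twofold_of_odd⟩
  by_contra hodd
  obtain ⟨y, rfl⟩ := even_iff_exists_two_mul.mp (Nat.not_odd_iff_even.mp hodd)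
  exact hq y (two_mul_mem_Icc_iff.mp hx) ((twofold_two_mul q χ y).symm.trans hxq)

theorem even_of_monochromatic_twofold (hq : ∀ y ∈ Finset.Icc 1 m, χ y ≠ q)
    (ha : a ∈ Finset.Icc 1 (2 * m + 1)) (hb : b ∈ Finset.Icc 1 (2 * m + 1))
    (hc : a + b ∈ Finset.Icc 1 (2 * m + 1)) (hab : twofold q χ a = twofold q χ b)
    (hbc : twofold q χ b = twofold q χ (a + b)) : Even a ∧ Even b := by
  have odd_ab : Odd a ↔ Odd b := by
    rw [← twofold_eq_iff_odd hq ha, ← twofold_eq_iff_odd hq hb, hab]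
  have odd_bc : Odd b ↔ Odd (a + b) := by
    rw [← twofold_eq_iff_odd hq hb, ← twofold_eq_iff_odd hq hc, hbc]
  have not_odd_b : ¬Odd b := fun hb ↦
    Nat.not_odd_iff_even.mpr ((odd_ab.mpr hb).add_odd hb) (odd_bc.mp hb)
  exact ⟨Nat.not_odd_iff_even.mp (odd_ab.not.mpr not_odd_b), Nat.not_odd_iff_even.mp not_odd_b⟩

theorem even_of_rainbow_twofold (hab : twofold q χ a ≠ twofold q χ b)
    (hac : twofold q χ a ≠ twofold q χ (a + b)) (hbc : twofold q χ b ≠ twofold q χ (a + b)) :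
    Even a ∧ Even b := by
  have not_both_odd {x y : ℕ} (hxy : twofold q χ x ≠ twofold q χ y) : ¬(Odd x ∧ Odd y) :=
    fun ⟨hx, hy⟩ ↦ hxy ((twofold_of_odd hx).trans (twofold_of_odd hy).symm)
  rcases a.even_or_odd with ha | ha <;> rcases b.even_or_odd with hb | hb
  · exact ⟨ha, hb⟩
  · exact (not_both_odd hbc ⟨hb, ha.add_odd hb⟩).elim
  · exact (not_both_odd hac ⟨ha, ha.add_even hb⟩).elim
  · exact (not_both_odd hab ⟨ha, hb⟩).elim

end Twofold

theorem weakGS_iff_image_eq {m : ℕ} {C : Finset ℕ} {χ : ℕ → ℕ} :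
    WeakGS m C χ ↔ (Finset.Icc 1 m).image χ = C ∧
      (∀ a ∈ Finset.Icc 1 m, ∀ b ∈ Finset.Icc 1 m, a + b ∈ Finset.Icc 1 m →
        a ≠ b → ¬(χ a = χ b ∧ χ b = χ (a + b))) ∧
      (∀ a ∈ Finset.Icc 1 m, ∀ b ∈ Finset.Icc 1 m, a + b ∈ Finset.Icc 1 m →
        ¬(χ a ≠ χ b ∧ χ a ≠ χ (a + b) ∧ χ b ≠ χ (a + b))) := by
  constructor
  · rintro ⟨maps, surj, mono, rainbow⟩
    refine ⟨?_, fun a ha b hb hc hab ↦ ?_, fun a ha b hb hc ↦ rainbow a ha b hb _ hc rfl⟩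
    · exact (Finset.image_subset_iff.mpr maps).antisymm
        fun i hi ↦ Finset.mem_image.mpr (surj i hi)
    · have ha_pos := (Finset.mem_Icc.mp ha).1
      have hb_pos := (Finset.mem_Icc.mp hb).1
      exact mono a ha b hb _ hc rfl hab (by omega) (by omega)
  · rintro ⟨rfl, mono, rainbow⟩
    refine ⟨fun _ ↦ Finset.mem_image_of_mem χ, fun _ ↦ Finset.mem_image.mp, ?_, ?_⟩
    · rintro a ha b hb _ hc rfl hab - -
      exact mono a ha b hb hc hab
    · rintro a ha b hb _ hc rfl
      exact rainbow a ha b hb hc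

theorem weak_twofold_general {m q : ℕ} {C : Finset ℕ} {χ : ℕ → ℕ} (hq : q ∉ C)
    (h : WeakGS m C χ) : WeakGS (2 * m + 1) (insert q C) (twofold q χ) := by
  obtain ⟨rfl, mono, rainbow⟩ := weakGS_iff_image_eq.mp h
  have fresh : ∀ x ∈ Finset.Icc 1 m, χ x ≠ q := fun x hx hxq ↦
    hq (hxq ▸ Finset.mem_image_of_mem χ hx)
  refine weakGS_iff_image_eq.mpr ⟨image_twofold q χ m, ?_, ?_⟩
  · rintro a ha b hb hc hab ⟨hχab, hχbc⟩
    obtain ⟨⟨x, rfl⟩, ⟨y, rfl⟩⟩ := (even_of_monochromatic_twofold fresh ha hb hc hχab hχbc).imp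
      even_iff_exists_two_mul.mp even_iff_exists_two_mul.mp
    simp only [← mul_add, two_mul_mem_Icc_iff, twofold_two_mul] at ha hb hc hχab hχbc
    exact mono x ha y hb hc (ne_of_apply_ne _ hab) ⟨hχab, hχbc⟩
  · rintro a ha b hb hc ⟨hχab, hχac, hχbc⟩
    obtain ⟨⟨x, rfl⟩, ⟨y, rfl⟩⟩ := (even_of_rainbow_twofold hχab hχac hχbc).imp
      even_iff_exists_two_mul.mp even_iff_exists_two_mul.mp
    simp only [← mul_add, two_mul_mem_Icc_iff, twofold_two_mul] at ha hb hc hχab hχac hχbc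
    exact rainbow x ha y hb hc ⟨hχab, hχac, hχbc⟩

/-- **2-fold construction, weak case.** If there is a weak Gallai–Schur
`r`-coloring of `[1, m]`, then there is a weak Gallai–Schur `(r+1)`-coloring
of `[1, 2m+1]`; explicitly, one obtained by giving all odd numbers the new
color `r + 1` and giving each even number `2x` the color that `x` had. -/
theorem weak_twofold (m r : ℕ) (hm : 1 ≤ m) (hr : 1 ≤ r) (χ : ℕ → ℕ)
    (h : WeakGS m (Finset.Icc 1 r) χ) :
    (∃ χ' : ℕ → ℕ, WeakGS (2 * m + 1) (Finset.Icc 1 (r + 1)) χ') ∧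
    WeakGS (2 * m + 1) (Finset.Icc 1 (r + 1))
      (fun x => if Odd x then r + 1 else χ (x / 2)) := by
  rw [← Finset.insert_Icc_right_eq_Icc_add_one (Nat.le_succ_of_le hr)]
  exact ⟨⟨_, weak_twofold_general (by simp) h⟩, weak_twofold_general (by simp) h⟩
end

section
/- If there exists a strong Gallai-Schur r-coloring of [1, m], then there exists a strong Gallai-Schur (r+2)-coloring of [1, 5m+4]. Explicitly, such a coloring is obtained by giving all numbers congruent to 2 or 3 modulo 5 one new color, giving all numbers congruent to 1 or 4 modulo 5 a second new color, and giving each multiple of 5, say 5x, the color that x had in the original coloring. -/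
/-!
Let `ψ` give the residues `±2` modulo `5` one color and `±1` another. Then `ψ` is symmetric, and
every solution of `a + b = c` in nonzero residues gets exactly two colors. In a solution of
`a + b = c` in positive integers the number of multiples of `5` is `0`, `1` or `3`. With none, the
solution inherits the property from `ψ`; with one, the other two terms agree up to sign modulo `5`,
so they share a new color while the multiple of `5` has an old one; with three, dividing by `5`
gives a solution in the original interval. Only the existence of `ψ` is special to `5`.
-/

open Finset

/-- Three colors that are neither all equal nor pairwise distinct: the condition a strong
Gallai–Schur coloring imposes on the colors of a solution of `a + b = c`. -/
def ExactlyTwoColors (i j l : ℕ) : Prop :=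
  ¬(i = j ∧ j = l) ∧ ¬(i ≠ j ∧ i ≠ l ∧ j ≠ l)

theorem strongGS_iff_s2 {m : ℕ} {C : Finset ℕ} {χ : ℕ → ℕ} :
    StrongGS m C χ ↔ (Icc 1 m).image χ = C ∧
      ∀ a b, 0 < a → 0 < b → a + b ≤ m → ExactlyTwoColors (χ a) (χ b) (χ (a + b)) := by
  constructor
  · rintro ⟨hmem, hsurj, hmono, hrainbow⟩
    refine ⟨Subset.antisymm (image_subset_iff.2 hmem) fun i hi ↦ mem_image.2 (hsurj i hi), ?_⟩
    intro a b ha hb hab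
    have ha' : a ∈ Icc 1 m := mem_Icc.2 ⟨ha, by lia⟩
    have hb' : b ∈ Icc 1 m := mem_Icc.2 ⟨hb, by lia⟩
    have hab' : a + b ∈ Icc 1 m := mem_Icc.2 ⟨by lia, hab⟩
    exact ⟨hmono a ha' b hb' _ hab' rfl, hrainbow a ha' b hb' _ hab' rfl⟩
  · rintro ⟨rfl, htwo⟩
    have htwo' : ∀ a ∈ Icc 1 m, ∀ b ∈ Icc 1 m, ∀ c ∈ Icc 1 m, a + b = c →
        ExactlyTwoColors (χ a) (χ b) (χ c) := by
      rintro a ha b hb _ hc rfl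
      exact htwo a b (mem_Icc.1 ha).1 (mem_Icc.1 hb).1 (mem_Icc.1 hc).2
    exact ⟨fun _ ↦ mem_image_of_mem χ, fun _ ↦ mem_image.1,
      fun a ha b hb c hc h ↦ (htwo' a ha b hb c hc h).1,
      fun a ha b hb c hc h ↦ (htwo' a ha b hb c hc h).2⟩

/-- A symmetric coloring of the residues modulo `k` for which every solution of `a + b = c` in
nonzero residues gets exactly two colors. The color of `0` is irrelevant. -/
structure IsModularStrongGS (k : ℕ) (ψ : ZMod k → ℕ) : Prop where
  map_neg (a : ZMod k) : ψ (-a) = ψ a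
  exactlyTwoColors {a b : ZMod k} (ha : a ≠ 0) (hb : b ≠ 0) (hab : a + b ≠ 0) :
    ExactlyTwoColors (ψ a) (ψ b) (ψ (a + b))

/-- The blow-up of a coloring `χ` by a coloring `ψ` of the residues modulo `k`: multiples `k * x`
get the color `χ x`, all other numbers the color of their residue. -/
def blowUp (k : ℕ) (ψ : ZMod k → ℕ) (χ : ℕ → ℕ) (x : ℕ) : ℕ :=
  if k ∣ x then χ (x / k) else ψ x

section BlowUp

variable {k : ℕ} {ψ : ZMod k → ℕ} {χ : ℕ → ℕ}

theorem blowUp_of_not_dvd {x : ℕ} (hx : ¬k ∣ x) : blowUp k ψ χ x = ψ x :=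
  if_neg hx

theorem blowUp_add_of_dvd_left {a b : ℕ} (ha : k ∣ a) (hb : ¬k ∣ b) :
    blowUp k ψ χ (a + b) = blowUp k ψ χ b := by
  rw [blowUp_of_not_dvd hb, blowUp_of_not_dvd (by rwa [Nat.dvd_add_right ha]), Nat.cast_add,
    (ZMod.natCast_eq_zero_iff a k).2 ha, zero_add]

theorem IsModularStrongGS.blowUp_eq_of_dvd_add (hψ : IsModularStrongGS k ψ) {a b : ℕ}
    (ha : ¬k ∣ a) (hab : k ∣ a + b) : blowUp k ψ χ a = blowUp k ψ χ b := by
  have hb : ¬k ∣ b := fun hb ↦ ha ((Nat.dvd_add_left hb).1 hab)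
  have hneg : (a : ZMod k) = -b := by
    rw [eq_neg_iff_add_eq_zero, ← Nat.cast_add, ZMod.natCast_eq_zero_iff]
    exact hab
  rw [blowUp_of_not_dvd ha, blowUp_of_not_dvd hb, hneg, hψ.map_neg]

variable [NeZero k]

theorem blowUp_mul (x : ℕ) : blowUp k ψ χ (k * x) = χ x := by
  simp [blowUp, Nat.mul_div_cancel_left x (NeZero.pos k)]

theorem mul_mem_Icc_iff {m n x : ℕ} (hn : n + 1 = k * (m + 1)) :
    k * x ∈ Icc 1 n ↔ x ∈ Icc 1 m := by
  have hle : k * x ≤ n ↔ x ≤ m := by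
    rw [← Nat.lt_add_one_iff, hn, Nat.mul_lt_mul_left (NeZero.pos k), Nat.lt_add_one_iff]
  simp [hle, Nat.one_le_iff_ne_zero, NeZero.ne k]

theorem image_blowUp {m n : ℕ} (hn : n + 1 = k * (m + 1)) :
    (Icc 1 n).image (blowUp k ψ χ) = (Icc 1 m).image χ ∪ ({0}ᶜ : Finset (ZMod k)).image ψ := by
  apply Subset.antisymm
  · refine image_subset_iff.2 fun x hx ↦ mem_union.2 ?_
    by_cases hk : k ∣ x
    · obtain ⟨y, rfl⟩ := hk
      rw [blowUp_mul]
      exact .inl (mem_image_of_mem χ ((mul_mem_Icc_iff hn).1 hx))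
    · rw [blowUp_of_not_dvd hk]
      exact .inr (mem_image_of_mem ψ (by simpa [ZMod.natCast_eq_zero_iff] using hk))
  · refine union_subset (image_subset_iff.2 fun x hx ↦ ?_) (image_subset_iff.2 fun a ha ↦ ?_)
    · exact mem_image.2 ⟨k * x, (mul_mem_Icc_iff hn).2 hx, blowUp_mul x⟩
    · have hpos : 0 < a.val := Nat.pos_of_ne_zero ((ZMod.val_ne_zero a).2 (by simpa using ha))
      have hlt : a.val < k := a.val_lt
      have hle : a.val ≤ n := by
        have := Nat.le_mul_of_pos_right k m.succ_pos
        lia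
      refine mem_image.2 ⟨a.val, mem_Icc.2 ⟨hpos, hle⟩, ?_⟩
      rw [blowUp_of_not_dvd (Nat.not_dvd_of_pos_of_lt hpos hlt), ZMod.natCast_zmod_val]

theorem strongGS_blowUp {m n : ℕ} {C : Finset ℕ} (hχ : StrongGS m C χ)
    (hψ : IsModularStrongGS k ψ) (hnew : ∀ a ≠ 0, ψ a ∉ C) (hn : n + 1 = k * (m + 1)) :
    StrongGS n (C ∪ ({0}ᶜ : Finset (ZMod k)).image ψ) (blowUp k ψ χ) := by
  obtain ⟨rfl, htwo⟩ := strongGS_iff_s2.1 hχ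
  refine strongGS_iff_s2.2 ⟨image_blowUp hn, fun a b ha hb hab ↦ ?_⟩
  have old_ne_new {x y : ℕ} (hx : x ∈ Icc 1 n) (hkx : k ∣ x) (hky : ¬k ∣ y) :
      blowUp k ψ χ x ≠ blowUp k ψ χ y := by
    obtain ⟨z, rfl⟩ := hkx
    rw [blowUp_mul, blowUp_of_not_dvd hky]
    intro h
    exact hnew y ((ZMod.natCast_eq_zero_iff y k).not.2 hky)
      (h ▸ mem_image_of_mem χ ((mul_mem_Icc_iff hn).1 hx))
  by_cases hka : k ∣ a <;> by_cases hkb : k ∣ b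
  · obtain ⟨x, rfl⟩ := hka
    obtain ⟨y, rfl⟩ := hkb
    rw [← mul_add] at hab ⊢
    have hxy := (mul_mem_Icc_iff hn).1 (mem_Icc.2 ⟨by lia, hab⟩)
    simpa only [blowUp_mul] using
      htwo x y (Nat.pos_of_mul_pos_left ha) (Nat.pos_of_mul_pos_left hb) (mem_Icc.1 hxy).2
  · have hne := old_ne_new (mem_Icc.2 ⟨ha, by lia⟩) hka hkb
    rw [blowUp_add_of_dvd_left hka hkb]
    grind [ExactlyTwoColors]
  · have hne := old_ne_new (mem_Icc.2 ⟨hb, by lia⟩) hkb hka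
    rw [add_comm a b, blowUp_add_of_dvd_left hkb hka]
    grind [ExactlyTwoColors]
  · by_cases hkab : k ∣ a + b
    · have hne := old_ne_new (mem_Icc.2 ⟨by lia, hab⟩) hkab hka
      rw [← hψ.blowUp_eq_of_dvd_add hka hkab]
      grind [ExactlyTwoColors]
    · rw [blowUp_of_not_dvd hka, blowUp_of_not_dvd hkb, blowUp_of_not_dvd hkab, Nat.cast_add]
      rw [← ZMod.natCast_eq_zero_iff] at hka hkb hkab
      exact hψ.exactlyTwoColors hka hkb (by rwa [← Nat.cast_add])

end BlowUp

/-- The coloring of the nonzero residues modulo `5` by two colors, `p` on `±2` and `q` on `±1`.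
The residue `0`, whose color `blowUp` never uses, also gets `q`. -/
def fiveColoring (p q : ℕ) (a : ZMod 5) : ℕ :=
  if a = 2 ∨ a = 3 then p else q

theorem isModularStrongGS_fiveColoring {p q : ℕ} (hpq : p ≠ q) :
    IsModularStrongGS 5 (fiveColoring p q) where
  map_neg a := by
    have hneg : ∀ a : ZMod 5, (-a = 2 ∨ -a = 3) ↔ (a = 2 ∨ a = 3) := by decide
    simp only [fiveColoring, hneg]
  exactlyTwoColors {a b} ha hb hab := by
    have not_monochromatic : ∀ a b : ZMod 5, a ≠ 0 → b ≠ 0 → a + b ≠ 0 →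
        ¬(((a = 2 ∨ a = 3) ↔ (b = 2 ∨ b = 3)) ∧ ((b = 2 ∨ b = 3) ↔ (a + b = 2 ∨ a + b = 3))) := by
      decide
    have := not_monochromatic a b ha hb hab
    grind [ExactlyTwoColors, fiveColoring]

theorem image_fiveColoring (p q : ℕ) :
    ({0}ᶜ : Finset (ZMod 5)).image (fiveColoring p q) = {p, q} := by
  have hcompl : ({0}ᶜ : Finset (ZMod 5)) = {2, 3, 1, 4} := by decide
  have hone : ¬((1 : ZMod 5) = 2 ∨ (1 : ZMod 5) = 3) := by decide
  have hfour : ¬((4 : ZMod 5) = 2 ∨ (4 : ZMod 5) = 3) := by decide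
  simp [hcompl, fiveColoring, hone, hfour]

theorem blowUp_fiveColoring (p q : ℕ) (χ : ℕ → ℕ) :
    blowUp 5 (fiveColoring p q) χ = fun x ↦
      if x % 5 = 2 ∨ x % 5 = 3 then p else if x % 5 = 1 ∨ x % 5 = 4 then q else χ (x / 5) := by
  funext x
  have htwo : (x : ZMod 5) = 2 ↔ x % 5 = 2 := ZMod.natCast_eq_natCast_iff' x 2 5
  have hthree : (x : ZMod 5) = 3 ↔ x % 5 = 3 := ZMod.natCast_eq_natCast_iff' x 3 5
  simp only [blowUp, fiveColoring, htwo, hthree]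
  grind

theorem strong_fivefold_general {m p q : ℕ} {C : Finset ℕ} {χ : ℕ → ℕ} (h : StrongGS m C χ)
    (hp : p ∉ C) (hq : q ∉ C) (hpq : p ≠ q) :
    StrongGS (5 * m + 4) (C ∪ {p, q}) (fun x ↦
      if x % 5 = 2 ∨ x % 5 = 3 then p else if x % 5 = 1 ∨ x % 5 = 4 then q else χ (x / 5)) := by
  have hnew : ∀ a ≠ 0, fiveColoring p q a ∉ C := fun a _ ↦ by
    unfold fiveColoring
    split_ifs <;> assumption
  rw [← blowUp_fiveColoring, ← image_fiveColoring p q]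
  exact strongGS_blowUp h (isModularStrongGS_fiveColoring hpq) hnew (by ring)

/-- **5-fold construction, strong case.** If there is a strong Gallai–Schur
`r`-coloring of `[1, m]`, then there is a strong Gallai–Schur `(r+2)`-coloring
of `[1, 5m+4]`; explicitly, one obtained by giving the numbers congruent to
`2` or `3` mod `5` the new color `r + 1`, the numbers congruent to `1` or `4`
mod `5` the new color `r + 2`, and each multiple `5x` of `5` the color `x` had. -/
theorem strong_fivefold (m r : ℕ) (hm : 1 ≤ m) (hr : 1 ≤ r) (χ : ℕ → ℕ)
    (h : StrongGS m (Finset.Icc 1 r) χ) :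
    (∃ χ' : ℕ → ℕ, StrongGS (5 * m + 4) (Finset.Icc 1 (r + 2)) χ') ∧
    StrongGS (5 * m + 4) (Finset.Icc 1 (r + 2))
      (fun x => if x % 5 = 2 ∨ x % 5 = 3 then r + 1
                else if x % 5 = 1 ∨ x % 5 = 4 then r + 2
                else χ (x / 5)) := by
  have hcolors : Finset.Icc 1 (r + 2) = Finset.Icc 1 r ∪ {r + 1, r + 2} := by grind
  have hfive := strong_fivefold_general h (p := r + 1) (q := r + 2) (by simp) (by simp) (by simp)
  rw [hcolors]
  exact ⟨⟨_, hfive⟩, hfive⟩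
end

section
/- If there exists a weak Gallai-Schur r-coloring of [1, m], then there exists a weak Gallai-Schur (r+2)-coloring of [1, 5m+4]. Explicitly, such a coloring is obtained by giving all numbers congruent to 2 or 3 modulo 5 one new color, giving all numbers congruent to 1 or 4 modulo 5 a second new color, and giving each multiple of 5, say 5x, the color that x had in the original coloring. -/
/-!
Color the multiples of `5` by rescaling the old coloring and the other numbers by their residue.
The residue classes `{1, 4}` and `{2, 3}` are sum-free and closed under negation. In a solution of
`a + b = c`, either all three terms are multiples of `5`, and we divide by `5`; or exactly one is,
and the other two share a new color because their residues agree up to sign; or none is, and their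
residues form a solution among the nonzero residues. Only the symmetry of the residue coloring and
the absence of monochromatic and rainbow solutions matter, so `5` may be any modulus having such a
coloring.
-/

/-- A coloring of the nonzero elements of an additive group, with color set exactly `D`, that is
invariant under negation and has no monochromatic and no rainbow solution of `a + b = c` among the
nonzero elements. Unlike in `WeakGS`, solutions with `a = b` count as monochromatic. The value at
`0` is never used. -/
structure IsSymmetricGallaiSchur {G : Type*} [AddGroup G] (D : Finset ℕ) (ρ : G → ℕ) : Prop where
  mem : ∀ a ≠ 0, ρ a ∈ D
  surj : ∀ i ∈ D, ∃ a ≠ 0, ρ a = i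
  neg : ∀ a ≠ 0, ρ (-a) = ρ a
  not_monochromatic : ∀ a b, a ≠ 0 → b ≠ 0 → a + b ≠ 0 → ¬(ρ a = ρ b ∧ ρ b = ρ (a + b))
  not_rainbow : ∀ a b, a ≠ 0 → b ≠ 0 → a + b ≠ 0 →
    ¬(ρ a ≠ ρ b ∧ ρ a ≠ ρ (a + b) ∧ ρ b ≠ ρ (a + b))

/-- The extension of a coloring `χ` by a coloring `ρ` of the nonzero residues modulo `k`:
multiples `k * x` receive the color `χ x`, all other numbers the color of their residue. -/
def modExtension (k : ℕ) (ρ : ZMod k → ℕ) (χ : ℕ → ℕ) (x : ℕ) : ℕ :=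
  if (x : ZMod k) = 0 then χ (x / k) else ρ x

section ModExtension

variable {k m : ℕ} {C D : Finset ℕ} {ρ : ZMod k → ℕ} {χ : ℕ → ℕ}

theorem modExtension_mul [NeZero k] (x : ℕ) : modExtension k ρ χ (k * x) = χ x := by
  simp [modExtension, Nat.mul_div_cancel_left x (NeZero.pos k)]

theorem modExtension_of_natCast_ne_zero {x : ℕ} (hx : (x : ZMod k) ≠ 0) :
    modExtension k ρ χ x = ρ x :=
  if_neg hx

theorem mul_mem_Icc_one_iff [NeZero k] {x : ℕ} :
    k * x ∈ Finset.Icc 1 (k * m + (k - 1)) ↔ x ∈ Finset.Icc 1 m := by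
  have hk : 0 < k := NeZero.pos k
  have upper : k * x ≤ k * m + (k - 1) ↔ x ≤ m := by
    have cancel : k * x < k * m + k ↔ x < m + 1 := by
      rw [← Nat.mul_succ, Nat.mul_lt_mul_left hk]
    omega
  simp only [Finset.mem_Icc, Nat.one_le_iff_ne_zero, mul_ne_zero_iff, hk.ne', upper, ne_eq,
    not_false_eq_true, true_and]

theorem exists_eq_mul_of_natCast_eq_zero [NeZero k] {x : ℕ}
    (hx : x ∈ Finset.Icc 1 (k * m + (k - 1))) (hx₀ : (x : ZMod k) = 0) :
    ∃ y ∈ Finset.Icc 1 m, x = k * y := by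
  obtain ⟨y, rfl⟩ := (ZMod.natCast_eq_zero_iff x k).1 hx₀
  exact ⟨y, mul_mem_Icc_one_iff.1 hx, rfl⟩

theorem modExtension_mem_of_natCast_eq_zero [NeZero k] (hχ : WeakGS m C χ) {x : ℕ}
    (hx : x ∈ Finset.Icc 1 (k * m + (k - 1))) (hx₀ : (x : ZMod k) = 0) :
    modExtension k ρ χ x ∈ C := by
  obtain ⟨y, hy, rfl⟩ := exists_eq_mul_of_natCast_eq_zero hx hx₀
  exact modExtension_mul (ρ := ρ) y ▸ hχ.1 y hy

theorem modExtension_mem_of_natCast_ne_zero (hρ : IsSymmetricGallaiSchur D ρ) {x : ℕ}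
    (hx₀ : (x : ZMod k) ≠ 0) : modExtension k ρ χ x ∈ D :=
  modExtension_of_natCast_ne_zero (χ := χ) hx₀ ▸ hρ.mem x hx₀

theorem modExtension_mem_iff_natCast_eq_zero [NeZero k] (hχ : WeakGS m C χ)
    (hρ : IsSymmetricGallaiSchur D ρ) (hCD : Disjoint C D) {x : ℕ}
    (hx : x ∈ Finset.Icc 1 (k * m + (k - 1))) :
    modExtension k ρ χ x ∈ C ↔ (x : ZMod k) = 0 := by
  refine ⟨fun hC => ?_, modExtension_mem_of_natCast_eq_zero hχ hx⟩
  by_contra hx₀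
  exact Finset.disjoint_left.1 hCD hC (modExtension_mem_of_natCast_ne_zero hρ hx₀)

theorem exists_modExtension_eq [NeZero k] (hχ : WeakGS m C χ) (hρ : IsSymmetricGallaiSchur D ρ)
    {i : ℕ} (hi : i ∈ C ∪ D) :
    ∃ x ∈ Finset.Icc 1 (k * m + (k - 1)), modExtension k ρ χ x = i := by
  rcases Finset.mem_union.1 hi with hC | hD
  · obtain ⟨y, hy, rfl⟩ := hχ.2.1 i hC
    exact ⟨k * y, mul_mem_Icc_one_iff.2 hy, modExtension_mul y⟩
  · obtain ⟨a, ha, rfl⟩ := hρ.surj i hD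
    have hval : (a.val : ZMod k) = a := ZMod.natCast_zmod_val a
    refine ⟨a.val, Finset.mem_Icc.2 ⟨?_, ?_⟩, ?_⟩
    · exact Nat.one_le_iff_ne_zero.2 ((ZMod.val_ne_zero a).2 ha)
    · exact (Nat.le_sub_one_of_lt a.val_lt).trans (Nat.le_add_left _ _)
    · rw [modExtension_of_natCast_ne_zero (hval.symm ▸ ha), hval]

theorem modExtension_not_monochromatic [NeZero k] (hχ : WeakGS m C χ)
    (hρ : IsSymmetricGallaiSchur D ρ) (hCD : Disjoint C D) {a b : ℕ}
    (ha : a ∈ Finset.Icc 1 (k * m + (k - 1))) (hb : b ∈ Finset.Icc 1 (k * m + (k - 1)))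
    (hc : a + b ∈ Finset.Icc 1 (k * m + (k - 1))) (hab : a ≠ b) :
    ¬(modExtension k ρ χ a = modExtension k ρ χ b ∧
      modExtension k ρ χ b = modExtension k ρ χ (a + b)) := by
  rintro ⟨hcol_ab, hcol_bc⟩
  have ha₀_iff : (a : ZMod k) = 0 ↔ (b : ZMod k) = 0 := by
    rw [← modExtension_mem_iff_natCast_eq_zero hχ hρ hCD ha, hcol_ab,
      modExtension_mem_iff_natCast_eq_zero hχ hρ hCD hb]
  have hb₀_iff : (b : ZMod k) = 0 ↔ ((a + b : ℕ) : ZMod k) = 0 := by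
    rw [← modExtension_mem_iff_natCast_eq_zero hχ hρ hCD hb, hcol_bc,
      modExtension_mem_iff_natCast_eq_zero hχ hρ hCD hc]
  by_cases ha₀ : (a : ZMod k) = 0
  · obtain ⟨x, hx, rfl⟩ := exists_eq_mul_of_natCast_eq_zero ha ha₀
    obtain ⟨y, hy, rfl⟩ := exists_eq_mul_of_natCast_eq_zero hb (ha₀_iff.1 ha₀)
    rw [← mul_add] at hc hcol_bc
    simp only [modExtension_mul] at hcol_ab hcol_bc
    have hx_pos : 1 ≤ x := (Finset.mem_Icc.1 hx).1
    have hy_pos : 1 ≤ y := (Finset.mem_Icc.1 hy).1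
    exact hχ.2.2.1 x hx y hy (x + y) (mul_mem_Icc_one_iff.1 hc) rfl (ne_of_apply_ne _ hab)
      (by omega) (by omega) ⟨hcol_ab, hcol_bc⟩
  · have hb₀ : (b : ZMod k) ≠ 0 := mt ha₀_iff.2 ha₀
    have hc₀ : ((a + b : ℕ) : ZMod k) ≠ 0 := mt hb₀_iff.2 hb₀
    rw [modExtension_of_natCast_ne_zero hb₀] at hcol_ab hcol_bc
    rw [modExtension_of_natCast_ne_zero ha₀] at hcol_ab
    rw [modExtension_of_natCast_ne_zero hc₀, Nat.cast_add] at hcol_bc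
    exact hρ.not_monochromatic a b ha₀ hb₀ (Nat.cast_add (R := ZMod k) a b ▸ hc₀)
      ⟨hcol_ab, hcol_bc⟩

theorem modExtension_eq_of_natCast_eq {x y : ℕ} (hxy : (x : ZMod k) = y)
    (hy₀ : (y : ZMod k) ≠ 0) : modExtension k ρ χ x = modExtension k ρ χ y := by
  rw [modExtension_of_natCast_ne_zero (hxy ▸ hy₀), modExtension_of_natCast_ne_zero hy₀, hxy]

theorem modExtension_eq_of_natCast_add_eq_zero (hρ : IsSymmetricGallaiSchur D ρ) {x y : ℕ}
    (hxy : (x : ZMod k) + y = 0) (hy₀ : (y : ZMod k) ≠ 0) :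
    modExtension k ρ χ x = modExtension k ρ χ y := by
  have hx : (x : ZMod k) = -y := eq_neg_of_add_eq_zero_left hxy
  have hx₀ : (x : ZMod k) ≠ 0 := hx ▸ neg_ne_zero.2 hy₀
  rw [modExtension_of_natCast_ne_zero hx₀, modExtension_of_natCast_ne_zero hy₀, hx,
    hρ.neg y hy₀]

theorem modExtension_not_rainbow [NeZero k] (hχ : WeakGS m C χ)
    (hρ : IsSymmetricGallaiSchur D ρ) {a b : ℕ}
    (ha : a ∈ Finset.Icc 1 (k * m + (k - 1))) (hb : b ∈ Finset.Icc 1 (k * m + (k - 1)))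
    (hc : a + b ∈ Finset.Icc 1 (k * m + (k - 1))) :
    ¬(modExtension k ρ χ a ≠ modExtension k ρ χ b ∧
      modExtension k ρ χ a ≠ modExtension k ρ χ (a + b) ∧
      modExtension k ρ χ b ≠ modExtension k ρ χ (a + b)) := by
  rintro ⟨hcol_ab, hcol_ac, hcol_bc⟩
  by_cases ha₀ : (a : ZMod k) = 0 <;> by_cases hb₀ : (b : ZMod k) = 0
  · obtain ⟨x, hx, rfl⟩ := exists_eq_mul_of_natCast_eq_zero ha ha₀
    obtain ⟨y, hy, rfl⟩ := exists_eq_mul_of_natCast_eq_zero hb hb₀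
    rw [← mul_add] at hc hcol_ac hcol_bc
    simp only [modExtension_mul] at hcol_ab hcol_ac hcol_bc
    exact hχ.2.2.2 x hx y hy (x + y) (mul_mem_Icc_one_iff.1 hc) rfl ⟨hcol_ab, hcol_ac, hcol_bc⟩
  · exact hcol_bc (modExtension_eq_of_natCast_eq (by simp [ha₀]) hb₀).symm
  · exact hcol_ac (modExtension_eq_of_natCast_eq (by simp [hb₀]) ha₀).symm
  · by_cases hc₀ : (a : ZMod k) + b = 0
    · exact hcol_ab (modExtension_eq_of_natCast_add_eq_zero hρ hc₀ hb₀)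
    · have hc₀' : ((a + b : ℕ) : ZMod k) ≠ 0 := by rwa [Nat.cast_add]
      rw [modExtension_of_natCast_ne_zero hc₀', Nat.cast_add] at hcol_ac hcol_bc
      rw [modExtension_of_natCast_ne_zero ha₀] at hcol_ab hcol_ac
      rw [modExtension_of_natCast_ne_zero hb₀] at hcol_ab hcol_bc
      exact hρ.not_rainbow a b ha₀ hb₀ hc₀ ⟨hcol_ab, hcol_ac, hcol_bc⟩

theorem WeakGS.modExtension [NeZero k] (hχ : WeakGS m C χ) (hρ : IsSymmetricGallaiSchur D ρ)
    (hCD : Disjoint C D) : WeakGS (k * m + (k - 1)) (C ∪ D) (modExtension k ρ χ) := by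
  refine ⟨fun x hx => ?_, fun i hi => exists_modExtension_eq hχ hρ hi, ?_, ?_⟩
  · by_cases hx₀ : (x : ZMod k) = 0
    · exact Finset.mem_union_left D (modExtension_mem_of_natCast_eq_zero hχ hx hx₀)
    · exact Finset.mem_union_right C (modExtension_mem_of_natCast_ne_zero hρ hx₀)
  · rintro a ha b hb _ hc rfl hab _ _
    exact modExtension_not_monochromatic hχ hρ hCD ha hb hc hab
  · rintro a ha b hb _ hc rfl
    exact modExtension_not_rainbow hχ hρ ha hb hc

end ModExtension

/-- The coloring of the nonzero residues modulo `5` whose color classes are `{2, 3}`, with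
color `s`, and `{1, 4}`, with color `t`. The value at `0` is irrelevant. -/
def modFiveColoring (s t : ℕ) (a : ZMod 5) : ℕ :=
  if a = 2 ∨ a = 3 then s else t

theorem modFiveColoring_eq_iff {s t : ℕ} (hst : s ≠ t) {a b : ZMod 5} :
    modFiveColoring s t a = modFiveColoring s t b ↔ ((a = 2 ∨ a = 3) ↔ (b = 2 ∨ b = 3)) := by
  unfold modFiveColoring
  split_ifs <;> simp_all [hst.symm]

theorem isSymmetricGallaiSchur_modFiveColoring {s t : ℕ} (hst : s ≠ t) :
    IsSymmetricGallaiSchur {s, t} (modFiveColoring s t) where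
  mem a _ := by
    unfold modFiveColoring
    split_ifs <;> simp
  surj i hi := by
    rcases Finset.mem_insert.1 hi with rfl | hi
    · exact ⟨2, by decide, rfl⟩
    · exact ⟨1, by decide, (Finset.mem_singleton.1 hi).symm⟩
  neg a _ := by
    rw [modFiveColoring_eq_iff hst]
    decide +revert
  not_monochromatic := by
    simp only [modFiveColoring_eq_iff hst]
    decide
  not_rainbow a b _ _ _ := by
    simp only [ne_eq, modFiveColoring_eq_iff hst]
    tauto

theorem modExtension_modFiveColoring (s t : ℕ) (χ : ℕ → ℕ) :
    modExtension 5 (modFiveColoring s t) χ =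
      fun x => if x % 5 = 2 ∨ x % 5 = 3 then s
                else if x % 5 = 1 ∨ x % 5 = 4 then t
                else χ (x / 5) := by
  funext x
  have natCast_eq_iff (j : ℕ) : (x : ZMod 5) = j ↔ x % 5 = j % 5 :=
    ZMod.natCast_eq_natCast_iff' x j 5
  have h₀ : (x : ZMod 5) = 0 ↔ x % 5 = 0 := mod_cast natCast_eq_iff 0
  have h₂ : (x : ZMod 5) = 2 ↔ x % 5 = 2 := mod_cast natCast_eq_iff 2
  have h₃ : (x : ZMod 5) = 3 ↔ x % 5 = 3 := mod_cast natCast_eq_iff 3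
  simp only [modExtension, modFiveColoring, h₀, h₂, h₃]
  split_ifs <;> first | rfl | omega

theorem weak_fivefold_general {m s t : ℕ} {C : Finset ℕ} {χ : ℕ → ℕ} (hχ : WeakGS m C χ)
    (hs : s ∉ C) (ht : t ∉ C) (hst : s ≠ t) :
    WeakGS (5 * m + 4) (C ∪ {s, t})
      (fun x => if x % 5 = 2 ∨ x % 5 = 3 then s
                else if x % 5 = 1 ∨ x % 5 = 4 then t
                else χ (x / 5)) := by
  have hCD : Disjoint C {s, t} := by simp [hs, ht]
  rw [← modExtension_modFiveColoring]
  exact hχ.modExtension (isSymmetricGallaiSchur_modFiveColoring hst) hCD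

/-- **5-fold construction, weak case.** If there is a weak Gallai–Schur
`r`-coloring of `[1, m]`, then there is a weak Gallai–Schur `(r+2)`-coloring
of `[1, 5m+4]`; explicitly, one obtained by giving the numbers congruent to
`2` or `3` mod `5` the new color `r + 1`, the numbers congruent to `1` or `4`
mod `5` the new color `r + 2`, and each multiple `5x` of `5` the color `x` had. -/
theorem weak_fivefold (m r : ℕ) (hm : 1 ≤ m) (hr : 1 ≤ r) (χ : ℕ → ℕ)
    (h : WeakGS m (Finset.Icc 1 r) χ) :
    (∃ χ' : ℕ → ℕ, WeakGS (5 * m + 4) (Finset.Icc 1 (r + 2)) χ') ∧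
    WeakGS (5 * m + 4) (Finset.Icc 1 (r + 2))
      (fun x => if x % 5 = 2 ∨ x % 5 = 3 then r + 1
                else if x % 5 = 1 ∨ x % 5 = 4 then r + 2
                else χ (x / 5)) := by
  have palette : Finset.Icc 1 r ∪ {r + 1, r + 2} = Finset.Icc 1 (r + 2) := by grind
  have extended := weak_fivefold_general h (s := r + 1) (t := r + 2) (by simp) (by simp) (by simp)
  exact palette ▸ ⟨⟨_, extended⟩, extended⟩
end

section
/- Let r > 3 and let χ be a weak Gallai-Schur r-coloring of [1, m] that is maximal, i.e., no weak Gallai-Schur r-coloring of [1, m'] exists for any m' > m. Then exactly one of the following holds. (a) m ≡ 4 (mod 5); the set of x ∈ [1,m] with x ≡ 1 or 4 (mod 5) is a single color class of χ; the set of x ∈ [1,m] with x ≡ 2 or 3 (mod 5) is a single color class of χ; every multiple of 5 in [1,m] receives one of the remaining r−2 colors, and the induced coloring x ↦ χ(5x) of [1, (m−4)/5] by these r−2 colors is a weak Gallai-Schur (r−2)-coloring. (b) m is odd; the set of odd numbers in [1,m] is a single color class of χ; every even number in [1,m] receives one of the remaining r−1 colors, and the induced coloring x ↦ χ(2x) of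 [1, (m−1)/2] by these r−1 colors is a weak Gallai-Schur (r−1)-coloring. -/
section

variable {α : Type*} {m n t : ℕ} {χ : ℕ → α}

/-- The avoidance conditions of a weak Gallai–Schur coloring of `[1, m]`, with no condition on the
set of colors: neither monochromatic solutions of `a + b = c` in distinct numbers nor rainbow
solutions. The arithmetic side conditions are filled in by `omega`. -/
structure GallaiSchurFree (m : ℕ) (χ : ℕ → α) : Prop where
  ne_of_eq : ∀ (a b c : ℕ) (_ : χ a = χ b) (_ : 0 < a := by omega) (_ : 0 < b := by omega)
    (_ : a ≠ b := by omega) (_ : a + b = c := by omega) (_ : c ≤ m := by omega), χ c ≠ χ a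
  eq_or_eq_or_eq : ∀ (a b c : ℕ) (_ : 0 < a := by omega) (_ : 0 < b := by omega)
    (_ : a + b = c := by omega) (_ : c ≤ m := by omega), χ a = χ b ∨ χ c = χ a ∨ χ c = χ b

theorem weakGS_iff {C : Finset ℕ} {χ : ℕ → ℕ} :
    WeakGS m C χ ↔ (Finset.Icc 1 m).image χ = C ∧ GallaiSchurFree m χ := by
  constructor
  · rintro ⟨hmaps, hsurj, hmono, hrain⟩
    have mem {x : ℕ} (hx : 0 < x ∧ x ≤ m) : x ∈ Finset.Icc 1 m := Finset.mem_Icc.2 hx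
    refine ⟨?_, ⟨fun a b c heq ha hb hab hc hcm => ?_, fun a b c ha hb hc hcm => ?_⟩⟩
    · ext i
      simp only [Finset.mem_image]
      exact ⟨by rintro ⟨x, hx, rfl⟩; exact hmaps x hx, hsurj i⟩
    · intro hca
      exact hmono a (mem (by omega)) b (mem (by omega)) c (mem (by omega)) hc hab (by omega)
        (by omega) ⟨heq, heq.symm.trans hca.symm⟩
    · have := hrain a (mem (by omega)) b (mem (by omega)) c (mem (by omega)) hc
      grind
  · rintro ⟨rfl, h⟩
    refine ⟨fun x hx => Finset.mem_image_of_mem χ hx, fun i hi => Finset.mem_image.1 hi, ?_, ?_⟩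
    · rintro a ha b hb c hc habc hab - - ⟨hχab, hχbc⟩
      simp only [Finset.mem_Icc] at ha hb hc
      exact h.ne_of_eq a b c hχab ha.1 hb.1 hab habc hc.2 (hχab.trans hχbc).symm
    · intro a ha b hb c hc habc
      simp only [Finset.mem_Icc] at ha hb hc
      have := h.eq_or_eq_or_eq a b c ha.1 hb.1 habc hc.2
      grind

/-- The number `t` is the first occurrence of its color, where `χ 0` is disregarded as a junk
value. -/
def IsNewColor (χ : ℕ → α) (t : ℕ) : Prop :=
  ∀ x ∈ Finset.Ico 1 t, χ x ≠ χ t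

/-- The part of alternative (b) of the theorem that concerns color classes: `c` is the color of
exactly the odd numbers in `[1, m]`. -/
def IsOddClass (m : ℕ) (χ : ℕ → α) (c : α) : Prop :=
  ∀ x ∈ Finset.Icc 1 m, (χ x = c ↔ Odd x)

/-- The part of alternative (a) of the theorem that concerns color classes: on `[1, m]`, the
classes of `c₁` and `c₂` are the nonzero quadratic residues and the nonresidues modulo `5`. -/
def IsPentaClasses (m : ℕ) (χ : ℕ → α) (c₁ c₂ : α) : Prop :=
  (∀ x ∈ Finset.Icc 1 m, (χ x = c₁ ↔ x % 5 = 1 ∨ x % 5 = 4)) ∧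
  (∀ x ∈ Finset.Icc 1 m, (χ x = c₂ ↔ x % 5 = 2 ∨ x % 5 = 3))

/-- The interval `[1, n]` is a maximal initial segment in which only the colors of `1` and `2`
occur: the third color of `χ` appears at `n + 1`. -/
structure IsTwoColorPrefix (χ : ℕ → α) (n : ℕ) : Prop where
  eq_or_eq : ∀ x ∈ Finset.Icc 1 n, χ x = χ 1 ∨ χ x = χ 2
  succ_ne_one : χ (n + 1) ≠ χ 1
  succ_ne_two : χ (n + 1) ≠ χ 2

theorem IsOddClass.not_isPentaClasses {c c₁ c₂ : α} (hm : 3 ≤ m) (hodd : IsOddClass m χ c) :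
    ¬ IsPentaClasses m χ c₁ c₂ := by
  rintro ⟨hclass, -⟩
  have h1 : 1 ∈ Finset.Icc 1 m := Finset.mem_Icc.2 (by omega)
  have h3 : 3 ∈ Finset.Icc 1 m := Finset.mem_Icc.2 (by omega)
  have heq : χ 3 = χ 1 := ((hodd 3 h3).2 (by decide)).trans ((hodd 1 h1).2 (by decide)).symm
  have hχ1 : χ 1 = c₁ := (hclass 1 h1).2 (by decide)
  exact absurd ((hclass 3 h3).1 (heq.trans hχ1)) (by decide)

theorem exists_first_color_notMem [DecidableEq α] (S : Finset α)
    (hS : S.card < ((Finset.Icc 1 m).image χ).card) :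
    ∃ t ∈ Finset.Icc 1 m, χ t ∉ S ∧ ∀ x ∈ Finset.Ico 1 t, χ x ∈ S := by
  have hex : ∃ t, t ∈ Finset.Icc 1 m ∧ χ t ∉ S := by
    obtain ⟨i, hi, hiS⟩ := Finset.exists_mem_notMem_of_card_lt_card hS
    obtain ⟨x, hx, rfl⟩ := Finset.mem_image.1 hi
    exact ⟨x, hx, hiS⟩
  obtain ⟨t, hmin⟩ := exists_minimal_of_wellFoundedLT _ hex
  refine ⟨t, hmin.prop.1, hmin.prop.2, fun x hx => ?_⟩
  have htm : t ≤ m := (Finset.mem_Icc.1 hmin.prop.1).2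
  rw [Finset.mem_Ico] at hx
  by_contra hxS
  exact hmin.not_prop_of_lt hx.2 ⟨Finset.mem_Icc.2 (by omega), hxS⟩

theorem IsTwoColorPrefix.isNewColor (hp : IsTwoColorPrefix χ n) : IsNewColor χ (n + 1) := by
  intro x hx heq
  rw [Finset.mem_Ico] at hx
  rcases hp.eq_or_eq x (Finset.mem_Icc.2 (by omega)) with h1 | h2
  · exact hp.succ_ne_one (heq.symm.trans h1)
  · exact hp.succ_ne_two (heq.symm.trans h2)

theorem exists_isTwoColorPrefix [DecidableEq α] (hcard : 2 < ((Finset.Icc 1 m).image χ).card) :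
    ∃ n < m, IsTwoColorPrefix χ n := by
  obtain ⟨t, ht, hnot, hmem⟩ :=
    exists_first_color_notMem {χ 1, χ 2} (Finset.card_le_two.trans_lt hcard)
  simp only [Finset.mem_insert, Finset.mem_singleton, not_or, Finset.mem_Icc] at ht hnot hmem
  obtain ⟨n, rfl⟩ : ∃ n, t = n + 1 := ⟨t - 1, by omega⟩
  refine ⟨n, ht.2, ⟨fun x hx => hmem x ?_, hnot.1, hnot.2⟩⟩
  rw [Finset.mem_Icc] at hx
  exact Finset.mem_Ico.2 (by omega)

namespace GallaiSchurFree

theorem palindrome (h : GallaiSchurFree m χ) (ht : IsNewColor χ t) (htm : t ≤ m) (a b : ℕ)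
    (ha : 0 < a := by omega) (hb : 0 < b := by omega) (hab : a + b = t := by omega) :
    χ a = χ b := by
  rcases h.eq_or_eq_or_eq a b t with heq | heq | heq
  · exact heq
  · exact absurd heq.symm (ht a (Finset.mem_Ico.2 (by omega)))
  · exact absurd heq.symm (ht b (Finset.mem_Ico.2 (by omega)))

/-- By the palindrome property, equality would make `a + (t - 2 * a) = t - a` monochromatic, where
`t` is the first place after `3 * a` with a new color. -/
theorem two_mul_ne [DecidableEq α] (h : GallaiSchurFree m χ) {a : ℕ} (ha : 0 < a)
    (hcard : ((Finset.Icc 1 (3 * a)).image χ).card < ((Finset.Icc 1 m).image χ).card) :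
    χ (2 * a) ≠ χ a := by
  intro heq
  obtain ⟨t, ht, hnot, hmem⟩ := exists_first_color_notMem _ hcard
  have hnew : IsNewColor χ t := fun x hx hxt => hnot (hxt ▸ hmem x hx)
  have h3a : 3 * a < t := by
    by_contra hle
    simp only [Finset.mem_Icc] at ht
    exact hnot (Finset.mem_image_of_mem χ (Finset.mem_Icc.2 (by omega)))
  have htm : t ≤ m := (Finset.mem_Icc.1 ht).2
  have h1 : χ (t - a) = χ a := h.palindrome hnew htm _ _
  have h2 : χ (t - 2 * a) = χ (2 * a) := h.palindrome hnew htm _ _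
  exact absurd h1 (h.ne_of_eq a (t - 2 * a) (t - a) (heq.symm.trans h2.symm))

theorem isOddClass_of_isTwoColorPrefix (h : GallaiSchurFree m χ) (hp : IsTwoColorPrefix χ n)
    (hnm : n < m) (h2 : χ 2 ≠ χ 1) (h3 : χ 3 = χ 1) : Odd n ∧ IsOddClass n χ (χ 1) := by
  have two_of_ne (x : ℕ) (hx : χ x ≠ χ 1) (hpos : 0 < x := by omega) (hxn : x ≤ n := by omega) :
      χ x = χ 2 := (hp.eq_or_eq x (Finset.mem_Icc.2 (by omega))).resolve_left hx
  have h4 (hn : 4 ≤ n) : χ 4 = χ 2 := two_of_ne 4 (h.ne_of_eq 1 3 4 h3.symm)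
  have hn : n < 7 := by
    by_contra! hn
    have h6 : χ 6 = χ 1 := (hp.eq_or_eq 6 (Finset.mem_Icc.2 (by omega))).resolve_right
      (h.ne_of_eq 2 4 6 (h4 (by omega)).symm)
    have h5 : χ 5 = χ 2 := two_of_ne 5 fun h5 => absurd h6 (h.ne_of_eq 1 5 6 h5.symm)
    have h7 : χ 7 = χ 2 := two_of_ne 7 (h.ne_of_eq 1 6 7 h6.symm)
    exact absurd h7 (h.ne_of_eq 2 5 7 h5.symm)
  have ne_one := hp.succ_ne_one
  have ne_two := hp.succ_ne_two
  interval_cases n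
  · exact absurd rfl ne_one
  · exact absurd rfl ne_two
  · exact absurd h3 ne_one
  · refine ⟨by decide, fun x hx => ?_⟩
    rw [Finset.mem_Icc] at hx
    obtain ⟨hx1, hx3⟩ := hx
    interval_cases x <;> simp [h2, h3, Nat.odd_iff]
  · exact absurd (h4 le_rfl ▸ h.palindrome hp.isNewColor hnm 1 4).symm h2
  · have h5 : χ 5 = χ 1 := h.palindrome hp.isNewColor hnm 5 1
    refine ⟨by decide, fun x hx => ?_⟩
    rw [Finset.mem_Icc] at hx
    obtain ⟨hx1, hx5⟩ := hx
    interval_cases x <;> simp [h2, h3, h4, h5, Nat.odd_iff]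
  · exact absurd ((h4 (by omega)).symm.trans ((h.palindrome hp.isNewColor hnm 4 3).trans h3)) h2

/-- The second alternative is the beginning `ABBBAC`, which only the fourth color rules out. -/
theorem isPentaClasses_of_isTwoColorPrefix (h : GallaiSchurFree m χ) (hp : IsTwoColorPrefix χ n)
    (hnm : n < m) (h2 : χ 2 ≠ χ 1) (h3 : χ 3 ≠ χ 1) :
    n = 4 ∧ IsPentaClasses 4 χ (χ 1) (χ 2) ∨ n = 5 ∧ χ 4 = χ 2 := by
  have h3' (hn : 3 ≤ n) : χ 3 = χ 2 := (hp.eq_or_eq 3 (Finset.mem_Icc.2 (by omega))).resolve_left h3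
  have hn : n < 6 := by
    by_contra! hn
    have h5 : χ 5 = χ 1 := (hp.eq_or_eq 5 (Finset.mem_Icc.2 (by omega))).resolve_right
      (h.ne_of_eq 2 3 5 (h3' (by omega)).symm)
    have h6 : χ 6 = χ 2 := (hp.eq_or_eq 6 (Finset.mem_Icc.2 (by omega))).resolve_left
      (h.ne_of_eq 1 5 6 h5.symm)
    have h4 : χ 4 = χ 1 := (hp.eq_or_eq 4 (Finset.mem_Icc.2 (by omega))).resolve_right
      fun h4 => absurd h6 (h.ne_of_eq 2 4 6 h4.symm)
    exact absurd h5 (h.ne_of_eq 1 4 5 h4.symm)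
  have ne_one := hp.succ_ne_one
  have ne_two := hp.succ_ne_two
  interval_cases n
  · exact absurd rfl ne_one
  · exact absurd rfl ne_two
  · exact absurd (h.palindrome hp.isNewColor hnm 2 1) h2
  · exact absurd (h.palindrome hp.isNewColor hnm 3 1) h3
  · have h4 : χ 4 = χ 1 := h.palindrome hp.isNewColor hnm 4 1
    refine Or.inl ⟨rfl, fun x hx => ?_, fun x hx => ?_⟩ <;>
    · rw [Finset.mem_Icc] at hx
      obtain ⟨hx1, hx4⟩ := hx
      interval_cases x <;> simp [h2, h2.symm, h3', h4]
  · exact Or.inr ⟨rfl, h.palindrome hp.isNewColor hnm 4 2⟩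

theorem isOddClass_of_prefix (h : GallaiSchurFree m χ) (hn : Odd n)
    (hclass : IsOddClass n χ (χ 1)) (ne_one : χ (n + 1) ≠ χ 1) (ne_two : χ (n + 1) ≠ χ 2) :
    IsOddClass m χ (χ 1) := by
  have hn3 : 3 ≤ n := by
    by_contra! hlt
    obtain rfl : n = 1 := by obtain ⟨k, rfl⟩ := hn; omega
    exact ne_two rfl
  intro x hx
  induction x using Nat.strong_induction_on with
  | _ x ih =>
    simp only [Finset.mem_Icc] at hx ih
    obtain hxn | rfl | hxn := lt_trichotomy x (n + 1)
    · exact hclass x (Finset.mem_Icc.2 (by omega))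
    · simp [ne_one, hn]
    have ih' (y : ℕ) (hy : 0 < y ∧ y < x) : χ y = χ 1 ↔ Odd y := ih y hy.2 ⟨hy.1, by omega⟩
    rcases Nat.even_or_odd x with hev | hodd
    · have hpred : χ (x - 1) = χ 1 := (ih' (x - 1) (by omega)).2 (by grind)
      simp [h.ne_of_eq 1 (x - 1) x hpred.symm, hev]
    · have hsub2 : χ (x - 2) = χ 1 := (ih' (x - 2) (by omega)).2 (by grind)
      have hsub : χ (x - (n + 1)) = χ 1 := (ih' (x - (n + 1)) (by omega)).2 (by grind)
      have h2 : χ 2 ≠ χ 1 := by simp [ih' 2 (by omega)]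
      have hsum2 := h.eq_or_eq_or_eq 2 (x - 2) x
      have hsum := h.eq_or_eq_or_eq (n + 1) (x - (n + 1)) x
      have hx1 : χ x = χ 1 := by grind
      simp [hx1, hodd]

theorem isPentaClasses_of_prefix (h : GallaiSchurFree m χ)
    (hclass : IsPentaClasses 4 χ (χ 1) (χ 2)) (ne_one : χ 5 ≠ χ 1) (ne_two : χ 5 ≠ χ 2) :
    IsPentaClasses m χ (χ 1) (χ 2) := by
  simp only [IsPentaClasses, ← forall₂_and] at hclass ⊢
  have h3 : χ 3 = χ 2 := (hclass 3 (by decide)).2.2 (by decide)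
  have h12 : χ 1 ≠ χ 2 := by simp [(hclass 1 (by decide)).2]
  intro x hx
  induction x using Nat.strong_induction_on with
  | _ x ih =>
    simp only [Finset.mem_Icc] at hx ih
    obtain hx5 | rfl | hx5 := lt_trichotomy x 5
    · exact hclass x (Finset.mem_Icc.2 (by omega))
    · simp [ne_one, ne_two]
    have classes (y : ℕ) (hy : 0 < y ∧ y < x) := ih y hy.2 ⟨hy.1, by omega⟩
    by_cases hres : x % 5 = 0
    · have hsub1 : χ (x - 1) = χ 1 := (classes (x - 1) (by omega)).1.2 (by omega)
      have hsub2 : χ (x - 2) = χ 2 := (classes (x - 2) (by omega)).2.2 (by omega)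
      simp [h.ne_of_eq 1 (x - 1) x hsub1.symm, h.ne_of_eq 2 (x - 2) x hsub2.symm, hres]
    have hsub5 : χ (x - 5) = χ 1 ∨ χ (x - 5) = χ 2 := by
      rw [(classes (x - 5) (by omega)).1, (classes (x - 5) (by omega)).2]
      omega
    have hx12 : χ x = χ 1 ∨ χ x = χ 2 := by
      obtain hres | hres | hres : x % 5 = 1 ∨ x % 5 = 2 ∨ x % 5 = 3 ∨ x % 5 = 4 := by omega
      · have hsub2 : χ (x - 2) = χ 1 := (classes (x - 2) (by omega)).1.2 (by omega)
        have hsum := h.eq_or_eq_or_eq 2 (x - 2) x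
        grind
      · have hsub3 : χ (x - 3) = χ 1 := (classes (x - 3) (by omega)).1.2 (by omega)
        have hsum := h.eq_or_eq_or_eq 3 (x - 3) x
        grind
      · have hsub1 : χ (x - 1) = χ 2 := (classes (x - 1) (by omega)).2.2 (by omega)
        have hsum := h.eq_or_eq_or_eq 1 (x - 1) x
        grind
    have hperiod : χ x = χ (x - 5) := by
      have hsum := h.eq_or_eq_or_eq 5 (x - 5) x
      grind
    rw [hperiod, show x % 5 = (x - 5) % 5 by omega]
    exact classes (x - 5) (by omega)

theorem isOddClass_or_isPentaClasses [DecidableEq α] (h : GallaiSchurFree m χ)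
    (hcard : 3 < ((Finset.Icc 1 m).image χ).card) :
    IsOddClass m χ (χ 1) ∨ IsPentaClasses m χ (χ 1) (χ 2) := by
  have h2 : χ 2 ≠ χ 1 := h.two_mul_ne one_pos (Finset.card_image_le.trans_lt (by simpa using hcard))
  obtain ⟨n, hnm, hp⟩ := exists_isTwoColorPrefix (χ := χ) (m := m) (by omega)
  by_cases h3 : χ 3 = χ 1
  · obtain ⟨hn, hclass⟩ := h.isOddClass_of_isTwoColorPrefix hp hnm h2 h3
    exact Or.inl (h.isOddClass_of_prefix hn hclass hp.succ_ne_one hp.succ_ne_two)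
  obtain ⟨rfl, hclass⟩ | ⟨rfl, h4⟩ := h.isPentaClasses_of_isTwoColorPrefix hp hnm h2 h3
  · exact Or.inr (h.isPentaClasses_of_prefix hclass hp.succ_ne_one hp.succ_ne_two)
  · have hsub : (Finset.Icc 1 6).image χ ⊆ {χ 1, χ 2, χ 6} := by
      refine Finset.image_subset_iff.2 fun x hx => ?_
      have := hp.eq_or_eq x
      simp only [Finset.mem_Icc, Finset.mem_insert, Finset.mem_singleton] at hx this ⊢
      obtain rfl | hx6 := eq_or_ne x 6
      · simp
      · have := this (by omega)
        tauto
    exact absurd h4 (h.two_mul_ne two_pos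
      (((Finset.card_le_card hsub).trans Finset.card_le_three).trans_lt hcard))

theorem update_succ (h : GallaiSchurFree m χ) {c : α}
    (hmono : ∀ a b, 0 < a → 0 < b → a + b = m + 1 → χ a = χ b → c ≠ χ a)
    (hrain : ∀ a b, 0 < a → 0 < b → a + b = m + 1 → χ a = χ b ∨ c = χ a ∨ c = χ b) :
    GallaiSchurFree (m + 1) (Function.update χ (m + 1) c) := by
  have update_of_le {x : ℕ} (hx : x ≤ m) : Function.update χ (m + 1) c x = χ x :=
    Function.update_of_ne (by omega) c χ
  constructor
  · intro a b d heq ha hb hne hab hd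
    rw [update_of_le (by omega), update_of_le (by omega)] at heq
    rw [update_of_le (by omega : a ≤ m)]
    rcases hd.lt_or_eq with hlt | rfl
    · rw [update_of_le (by omega)]
      exact h.ne_of_eq a b d heq
    · rw [Function.update_self]
      exact hmono a b ha hb hab heq
  · intro a b d ha hb hab hd
    rw [update_of_le (by omega : a ≤ m), update_of_le (by omega : b ≤ m)]
    rcases hd.lt_or_eq with hlt | rfl
    · rw [update_of_le (by omega)]
      exact h.eq_or_eq_or_eq a b d
    · rw [Function.update_self]
      exact hrain a b ha hb hab

theorem update_succ_of_isOddClass (h : GallaiSchurFree m χ) {c : α} (hclass : IsOddClass m χ c)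
    (hm : Even m) : GallaiSchurFree (m + 1) (Function.update χ (m + 1) c) := by
  have mem {x : ℕ} (hx : 0 < x ∧ x ≤ m) : x ∈ Finset.Icc 1 m := Finset.mem_Icc.2 hx
  refine h.update_succ (fun a b ha hb hab hχ hc => ?_) fun a b ha hb hab => ?_
  · have hodda : Odd a := (hclass a (mem (by omega))).1 hc.symm
    have hoddb : Odd b := (hclass b (mem (by omega))).1 (hχ.symm.trans hc.symm)
    exact Nat.not_even_iff_odd.2 hm.add_one (hab ▸ hodda.add_odd hoddb)
  · rcases Nat.even_or_odd a with heva | hodda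
    · have hoddb : Odd b := by grind
      exact Or.inr (Or.inr ((hclass b (mem (by omega))).2 hoddb).symm)
    · exact Or.inr (Or.inl ((hclass a (mem (by omega))).2 hodda).symm)

theorem exists_update_succ_of_isPentaClasses (h : GallaiSchurFree m χ) {c₁ c₂ : α}
    (hclass : IsPentaClasses m χ c₁ c₂) (hm : m % 5 ≠ 4) :
    ∃ c, (c = c₁ ∨ c = c₂) ∧ GallaiSchurFree (m + 1) (Function.update χ (m + 1) c) := by
  have class₁ {x : ℕ} (hx : 0 < x ∧ x ≤ m) := hclass.1 x (Finset.mem_Icc.2 hx)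
  have class₂ {x : ℕ} (hx : 0 < x ∧ x ≤ m) := hclass.2 x (Finset.mem_Icc.2 hx)
  -- Both classes are sum-free modulo `5`, and if neither summand of `m + 1` is in the class of
  -- `m + 1`, then both are in the other class.
  by_cases hres : (m + 1) % 5 = 1 ∨ (m + 1) % 5 = 4
  · refine ⟨c₁, Or.inl rfl, h.update_succ (fun a b ha hb hab hχ hc => ?_) fun a b ha hb hab => ?_⟩
    · have hresa := (class₁ (x := a) (by omega)).1 hc.symm
      have hresb := (class₁ (x := b) (by omega)).1 (hχ.symm.trans hc.symm)
      omega
    · rw [eq_comm (a := c₁), eq_comm (a := c₁), class₁ (x := a) (by omega),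
        class₁ (x := b) (by omega), or_iff_not_imp_right]
      intro hother
      rw [(class₂ (by omega)).2 (by omega : a % 5 = 2 ∨ a % 5 = 3),
        (class₂ (by omega)).2 (by omega : b % 5 = 2 ∨ b % 5 = 3)]
  · refine ⟨c₂, Or.inr rfl, h.update_succ (fun a b ha hb hab hχ hc => ?_) fun a b ha hb hab => ?_⟩
    · have hresa := (class₂ (x := a) (by omega)).1 hc.symm
      have hresb := (class₂ (x := b) (by omega)).1 (hχ.symm.trans hc.symm)
      omega
    · rw [eq_comm (a := c₂), eq_comm (a := c₂), class₂ (x := a) (by omega),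
        class₂ (x := b) (by omega), or_iff_not_imp_right]
      intro hother
      rw [(class₁ (by omega)).2 (by omega : a % 5 = 1 ∨ a % 5 = 4),
        (class₁ (by omega)).2 (by omega : b % 5 = 1 ∨ b % 5 = 4)]

theorem comp_mul_left (h : GallaiSchurFree m χ) {k : ℕ} (hk : 0 < k) :
    GallaiSchurFree (m / k) (fun x => χ (k * x)) where
  ne_of_eq a b c heq ha hb hne hab hc :=
    h.ne_of_eq (k * a) (k * b) (k * c) heq (Nat.mul_pos hk ha) (Nat.mul_pos hk hb)
      (by simpa [hk.ne'] using hne) (by rw [← hab, mul_add])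
      ((Nat.mul_le_mul_left k hc).trans (Nat.mul_div_le m k))
  eq_or_eq_or_eq a b c ha hb hab hc :=
    h.eq_or_eq_or_eq (k * a) (k * b) (k * c) (Nat.mul_pos hk ha) (Nat.mul_pos hk hb)
      (by rw [← hab, mul_add]) ((Nat.mul_le_mul_left k hc).trans (Nat.mul_div_le m k))

end GallaiSchurFree

namespace WeakGS

variable {C D : Finset ℕ} {χ : ℕ → ℕ}

theorem update_succ {c : ℕ} (h : WeakGS m C χ) (hc : c ∈ C)
    (hfree : GallaiSchurFree (m + 1) (Function.update χ (m + 1) c)) :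
    WeakGS (m + 1) C (Function.update χ (m + 1) c) := by
  obtain ⟨rfl, -⟩ := weakGS_iff.1 h
  have heq : (Finset.Icc 1 m).image (Function.update χ (m + 1) c) = (Finset.Icc 1 m).image χ :=
    Finset.image_congr fun x hx =>
      Function.update_of_ne (Nat.lt_succ_of_le (Finset.mem_Icc.1 hx).2).ne c χ
  refine weakGS_iff.2 ⟨?_, hfree⟩
  rw [← Finset.insert_Icc_right_eq_Icc_add_one (by omega), Finset.image_insert,
    Function.update_self, heq, Finset.insert_eq_of_mem hc]

theorem comp_mul_left (h : WeakGS m C χ) {k : ℕ} (hk : 0 < k) (hDC : D ⊆ C)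
    (hD : ∀ x ∈ Finset.Icc 1 m, (χ x ∈ D ↔ k ∣ x)) :
    WeakGS (m / k) D (fun x => χ (k * x)) := by
  obtain ⟨rfl, hfree⟩ := weakGS_iff.1 h
  have hmem {y : ℕ} : y ∈ Finset.Icc 1 (m / k) ↔ k * y ∈ Finset.Icc 1 m := by
    rw [Finset.mem_Icc, Finset.mem_Icc, Nat.le_div_iff_mul_le hk, mul_comm y k]
    exact and_congr_left' (Nat.mul_pos_iff_of_pos_left hk).symm
  refine weakGS_iff.2 ⟨Finset.Subset.antisymm ?_ fun i hi => ?_, hfree.comp_mul_left hk⟩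
  · exact Finset.image_subset_iff.2 fun y hy => (hD _ (hmem.1 hy)).2 (dvd_mul_right k y)
  · obtain ⟨x, hx, rfl⟩ := Finset.mem_image.1 (hDC hi)
    obtain ⟨y, rfl⟩ := (hD x hx).1 hi
    exact Finset.mem_image.2 ⟨y, hmem.2 hx, rfl⟩

theorem comp_two_mul {c : ℕ} (h : WeakGS m C χ) (hclass : IsOddClass m χ c) :
    WeakGS (m / 2) (C \ {c}) (fun x => χ (2 * x)) := by
  refine h.comp_mul_left two_pos Finset.sdiff_subset fun x hx => ?_
  simp [h.1 x hx, hclass x hx, even_iff_two_dvd]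

theorem comp_five_mul {c₁ c₂ : ℕ} (h : WeakGS m C χ) (hclass : IsPentaClasses m χ c₁ c₂) :
    WeakGS (m / 5) (C \ {c₁, c₂}) (fun x => χ (5 * x)) := by
  refine h.comp_mul_left (by norm_num) Finset.sdiff_subset fun x hx => ?_
  simp only [Finset.mem_sdiff, Finset.mem_insert, Finset.mem_singleton, h.1 x hx, hclass.1 x hx,
    hclass.2 x hx, true_and]
  omega

end WeakGS

end

theorem weak_maximal_structure_general {m : ℕ} {C : Finset ℕ} {χ : ℕ → ℕ} (hC : 3 < C.card)
    (h : WeakGS m C χ) (hmax : ∀ c, ¬ WeakGS (m + 1) C (Function.update χ (m + 1) c)) :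
    Xor
      (m % 5 = 4 ∧
        ∃ c₁ ∈ C, ∃ c₂ ∈ C, c₁ ≠ c₂ ∧
          (∀ x ∈ Finset.Icc 1 m, (χ x = c₁ ↔ (x % 5 = 1 ∨ x % 5 = 4))) ∧
          (∀ x ∈ Finset.Icc 1 m, (χ x = c₂ ↔ (x % 5 = 2 ∨ x % 5 = 3))) ∧
          (∀ x ∈ Finset.Icc 1 m, 5 ∣ x → χ x ≠ c₁ ∧ χ x ≠ c₂) ∧
          WeakGS ((m - 4) / 5) (C \ {c₁, c₂}) (fun x => χ (5 * x)))
      (Odd m ∧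
        ∃ c₁ ∈ C,
          (∀ x ∈ Finset.Icc 1 m, (χ x = c₁ ↔ Odd x)) ∧
          (∀ x ∈ Finset.Icc 1 m, Even x → χ x ≠ c₁) ∧
          WeakGS ((m - 1) / 2) (C \ {c₁}) (fun x => χ (2 * x))) := by
  obtain ⟨himage, hfree⟩ := weakGS_iff.1 h
  have hm : 3 < m := by
    have hle : C.card ≤ (Finset.Icc 1 m).card := himage ▸ Finset.card_image_le
    rw [Nat.card_Icc] at hle
    omega
  have hχ1 : χ 1 ∈ C := h.1 1 (Finset.mem_Icc.2 (by omega))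
  have hχ2 : χ 2 ∈ C := h.1 2 (Finset.mem_Icc.2 (by omega))
  refine (xor_iff_or_and_not_and _ _).2 ⟨?_, ?_⟩
  · rcases hfree.isOddClass_or_isPentaClasses (himage ▸ hC) with hclass | hclass
    · have hodd : Odd m := Nat.not_even_iff_odd.1 fun hev =>
        hmax _ (h.update_succ hχ1 (hfree.update_succ_of_isOddClass hclass hev))
      refine Or.inr ⟨hodd, χ 1, hχ1, hclass, fun x hx hev => ?_, ?_⟩
      · simpa [hclass x hx] using hev
      · rw [show (m - 1) / 2 = m / 2 by grind]
        exact h.comp_two_mul hclass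
    · have hmod : m % 5 = 4 := by
        by_contra hmod
        obtain ⟨c, hc, hfree'⟩ := hfree.exists_update_succ_of_isPentaClasses hclass hmod
        exact hmax c (h.update_succ (by grind) hfree')
      refine Or.inl ⟨hmod, χ 1, hχ1, χ 2, hχ2, ?_, hclass.1, hclass.2, fun x hx hdvd => ?_, ?_⟩
      · simp [hclass.2 1 (Finset.mem_Icc.2 (by omega))]
      · rw [Ne, Ne, hclass.1 x hx, hclass.2 x hx]
        omega
      · rw [show (m - 4) / 5 = m / 5 by omega]
        exact h.comp_five_mul hclass
  · rintro ⟨⟨-, c₁, -, c₂, -, -, hclass₁, hclass₂, -⟩, -, c, -, hodd, -⟩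
    exact IsOddClass.not_isPentaClasses hm.le hodd ⟨hclass₁, hclass₂⟩

/-- **Structure of maximal weak Gallai–Schur colorings.** Let `r > 3` and let
`χ` be a weak Gallai–Schur `r`-coloring of `[1, m]` that is maximal (no such
coloring of any longer interval exists).  Then exactly one of the following holds:
(a) `m ≡ 4 (mod 5)`, the residues `1, 4` mod `5` form one color class, the
residues `2, 3` mod `5` form another, multiples of `5` get the remaining `r - 2`
colors, and `x ↦ χ (5 * x)` is a weak Gallai–Schur coloring of `[1, (m-4)/5]`
with those `r - 2` colors; or
(b) `m` is odd, the odd numbers form one color class, even numbers get the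
remaining `r - 1` colors, and `x ↦ χ (2 * x)` is a weak Gallai–Schur coloring
of `[1, (m-1)/2]` with those `r - 1` colors. -/
theorem weak_maximal_structure (m r : ℕ) (hr : 3 < r) (χ : ℕ → ℕ)
    (h : WeakGS m (Finset.Icc 1 r) χ)
    (hmax : ∀ m', m < m' → ∀ χ' : ℕ → ℕ, ¬ WeakGS m' (Finset.Icc 1 r) χ') :
    Xor'
      (m % 5 = 4 ∧
        ∃ c₁ ∈ Finset.Icc 1 r, ∃ c₂ ∈ Finset.Icc 1 r, c₁ ≠ c₂ ∧
          (∀ x ∈ Finset.Icc 1 m, (χ x = c₁ ↔ (x % 5 = 1 ∨ x % 5 = 4))) ∧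
          (∀ x ∈ Finset.Icc 1 m, (χ x = c₂ ↔ (x % 5 = 2 ∨ x % 5 = 3))) ∧
          (∀ x ∈ Finset.Icc 1 m, 5 ∣ x → χ x ≠ c₁ ∧ χ x ≠ c₂) ∧
          WeakGS ((m - 4) / 5) (Finset.Icc 1 r \ {c₁, c₂}) (fun x => χ (5 * x)))
      (Odd m ∧
        ∃ c₁ ∈ Finset.Icc 1 r,
          (∀ x ∈ Finset.Icc 1 m, (χ x = c₁ ↔ Odd x)) ∧
          (∀ x ∈ Finset.Icc 1 m, Even x → χ x ≠ c₁) ∧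
          WeakGS ((m - 1) / 2) (Finset.Icc 1 r \ {c₁}) (fun x => χ (2 * x))) := by
  exact weak_maximal_structure_general (by simpa using hr) h fun _ => hmax _ m.lt_succ_self _
end

section
/- Let r > 3 and let χ be a strong Gallai-Schur r-coloring of [1, m] with χ(3) = χ(2). Then for every t ≥ 0: whenever the relevant integer lies in [1, m], one has χ(5t+1) = χ(5t+4) = χ(1), χ(5t+2) = χ(5t+3) = χ(2), and χ(5t+5) ∉ {χ(1), χ(2)}. -/
/-!
A number with two representations `a + b = c + d` has its color among those of `a`, `b` and, when
`c` and `d` differ in color, among those of `c`, `d`. So if the color of `a` differs from the other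
three, `a + b` must be colored like `b`. Here `χ 4 = χ 1`, and the color of `5` is neither `χ 1` nor
`χ 2`. Take `a` to be a multiple of `5` of neither of these colors, `b = 1, 2, 3, 4`, and rewrite
`a + b` as the sum of a number of color `χ 1` and a number of color `χ 2`: the pattern on
`[1, 4]` repeats after `a`. The next multiple of `5` is a sum of two numbers of color `χ 1` and also
of two numbers of color `χ 2`, so its color is again neither of them.
-/

/-- A coloring of `[1, m]`, in any type of colors, without monochromatic or rainbow solutions of
`a + b = c`; unlike `StrongGS`, it fixes no set of colors to be attained. As there, the coloring is
a function on `ℕ` whose values outside `[1, m]` are unconstrained. -/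
structure IsGallaiSchur {α : Type*} (m : ℕ) (χ : ℕ → α) : Prop where
  add_ne {a b : ℕ} (ha : 0 < a) (hb : 0 < b) (hm : a + b ≤ m) (hab : χ a = χ b) :
    χ (a + b) ≠ χ b
  add_eq_or_eq {a b : ℕ} (ha : 0 < a) (hb : 0 < b) (hm : a + b ≤ m) (hab : χ a ≠ χ b) :
    χ (a + b) = χ a ∨ χ (a + b) = χ b

/-- The part of `[k + 1, k + 5]` inside `[1, m]` is colored in the pattern `χ 1, χ 2, χ 2, χ 1, ∗`,
where `∗` is any color other than `χ 1` and `χ 2`. This is the block that repeats with period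
five. -/
def IsPeriodBlock {α : Type*} (m : ℕ) (χ : ℕ → α) (k : ℕ) : Prop :=
  (k + 1 ≤ m → χ (k + 1) = χ 1) ∧
  (k + 4 ≤ m → χ (k + 4) = χ 1) ∧
  (k + 2 ≤ m → χ (k + 2) = χ 2) ∧
  (k + 3 ≤ m → χ (k + 3) = χ 2) ∧
  (k + 5 ≤ m → χ (k + 5) ≠ χ 1 ∧ χ (k + 5) ≠ χ 2)

theorem StrongGS.isGallaiSchur {m : ℕ} {C : Finset ℕ} {χ : ℕ → ℕ} (h : StrongGS m C χ) :
    IsGallaiSchur m χ := by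
  obtain ⟨-, -, not_mono, not_rainbow⟩ := h
  have mem_Icc {a b : ℕ} (ha : 0 < a) (hb : 0 < b) (hm : a + b ≤ m) :
      a ∈ Finset.Icc 1 m ∧ b ∈ Finset.Icc 1 m ∧ a + b ∈ Finset.Icc 1 m := by
    simp only [Finset.mem_Icc]
    omega
  constructor
  · intro a b ha hb hm hab hsum
    obtain ⟨ha, hb, hc⟩ := mem_Icc ha hb hm
    exact not_mono a ha b hb (a + b) hc rfl ⟨hab, hsum.symm⟩
  · intro a b ha hb hm hab
    obtain ⟨ha, hb, hc⟩ := mem_Icc ha hb hm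
    by_contra! hsum
    exact not_rainbow a ha b hb (a + b) hc rfl ⟨hab, hsum.1.symm, hsum.2.symm⟩

namespace IsGallaiSchur

variable {α : Type*} {m : ℕ} {χ : ℕ → α}

theorem add_eq_right_of_add_eq_add (h : IsGallaiSchur m χ) {a b c d : ℕ}
    (ha : 0 < a) (hb : 0 < b) (hc : 0 < c) (hd : 0 < d) (hsum : a + b = c + d) (hm : a + b ≤ m)
    (hab : χ a ≠ χ b) (hac : χ a ≠ χ c) (had : χ a ≠ χ d) (hcd : χ c ≠ χ d) :
    χ (a + b) = χ b := by
  refine (h.add_eq_or_eq ha hb hm hab).resolve_left fun hsum_a => ?_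
  rcases h.add_eq_or_eq hc hd (hsum ▸ hm) hcd with hsum_c | hsum_d
  · exact hac (by rw [← hsum_a, hsum, hsum_c])
  · exact had (by rw [← hsum_a, hsum, hsum_d])

theorem color_one_ne_color_two (h : IsGallaiSchur m χ) (hm : 2 ≤ m) : χ 1 ≠ χ 2 :=
  (h.add_ne one_pos one_pos hm rfl).symm

theorem color_four_eq_color_one (h : IsGallaiSchur m χ) (h32 : χ 3 = χ 2) (hm : 4 ≤ m) :
    χ 4 = χ 1 := by
  have h13 : χ 1 ≠ χ 3 := h32 ▸ h.color_one_ne_color_two (by omega)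
  have h43 : χ 4 ≠ χ 3 := h32 ▸ h.add_ne two_pos two_pos hm rfl
  exact (h.add_eq_or_eq (a := 1) (b := 3) one_pos three_pos hm h13).resolve_right h43

theorem isPeriodBlock_zero (h : IsGallaiSchur m χ) (h32 : χ 3 = χ 2) : IsPeriodBlock m χ 0 := by
  refine ⟨fun _ => rfl, h.color_four_eq_color_one h32, fun _ => rfl, fun _ => h32,
    fun hm => ⟨?_, ?_⟩⟩
  · exact h.add_ne (a := 4) (b := 1) four_pos one_pos hm
      (h.color_four_eq_color_one h32 (by omega))
  · exact h.add_ne (a := 3) (b := 2) three_pos two_pos hm h32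

theorem isPeriodBlock_add_five (h : IsGallaiSchur m χ) (h32 : χ 3 = χ 2) {k : ℕ}
    (hk : IsPeriodBlock m χ k) : IsPeriodBlock m χ (k + 5) := by
  obtain ⟨-, hk4, -, hk3, hk5⟩ := hk
  have h12 (hm : k + 5 ≤ m) : χ 1 ≠ χ 2 := h.color_one_ne_color_two (by omega)
  have h41 (hm : k + 5 ≤ m) : χ 4 = χ 1 := h.color_four_eq_color_one h32 (by omega)
  have first (hm : k + 5 + 1 ≤ m) : χ (k + 5 + 1) = χ 1 := by
    apply h.add_eq_right_of_add_eq_add (c := k + 4) (d := 2) <;> grind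
  have second (hm : k + 5 + 2 ≤ m) : χ (k + 5 + 2) = χ 2 := by
    apply h.add_eq_right_of_add_eq_add (c := k + 3) (d := 4) <;> grind
  have third (hm : k + 5 + 3 ≤ m) : χ (k + 5 + 3) = χ 2 := by
    rw [← h32]
    apply h.add_eq_right_of_add_eq_add (c := k + 5 + 1) (d := 2) <;> grind
  have fourth (hm : k + 5 + 4 ≤ m) : χ (k + 5 + 4) = χ 1 := by
    rw [← h41 (by omega)]
    apply h.add_eq_right_of_add_eq_add (c := k + 5 + 3) (d := 1) <;> grind
  refine ⟨first, fourth, second, third, fun hm => ⟨?_, ?_⟩⟩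
  · exact h.add_ne (a := k + 5 + 4) (b := 1) (by omega) one_pos hm (fourth (by omega))
  · exact h.add_ne (a := k + 5 + 3) (b := 2) (by omega) two_pos hm (third (by omega))

end IsGallaiSchur

theorem strong_period_five_general {α : Type*} {m : ℕ} {χ : ℕ → α} (h : IsGallaiSchur m χ)
    (h32 : χ 3 = χ 2) (t : ℕ) : IsPeriodBlock m χ (5 * t) := by
  induction t with
  | zero => exact h.isPeriodBlock_zero h32
  | succ t ih => exact h.isPeriodBlock_add_five h32 ih

/-- Let `r > 3` and let `χ` be a strong Gallai–Schur `r`-coloring of `[1, m]`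
with `χ 3 = χ 2`.  Then for every `t ≥ 0`, whenever the relevant integer lies
in `[1, m]`: `χ (5t+1) = χ (5t+4) = χ 1`, `χ (5t+2) = χ (5t+3) = χ 2`, and
`χ (5t+5) ∉ {χ 1, χ 2}`. -/
theorem strong_period_five (m r : ℕ) (hr : 3 < r) (χ : ℕ → ℕ)
    (h : StrongGS m (Finset.Icc 1 r) χ) (h32 : χ 3 = χ 2) :
    ∀ t : ℕ,
      (5 * t + 1 ≤ m → χ (5 * t + 1) = χ 1) ∧
      (5 * t + 4 ≤ m → χ (5 * t + 4) = χ 1) ∧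
      (5 * t + 2 ≤ m → χ (5 * t + 2) = χ 2) ∧
      (5 * t + 3 ≤ m → χ (5 * t + 3) = χ 2) ∧
      (5 * t + 5 ≤ m → χ (5 * t + 5) ≠ χ 1 ∧ χ (5 * t + 5) ≠ χ 2) :=
  strong_period_five_general h.isGallaiSchur h32
end

section
/- Let r > 3 and let χ be a strong Gallai-Schur r-coloring of [1, m] with m ≥ 3 and χ(3) = χ(1). Then every odd x ∈ [1, m] satisfies χ(x) = χ(1), and every even x ∈ [1, m] satisfies χ(x) ≠ χ(1). -/
/-!
As `χ 3 = χ 1` and `1 + 1 = 2`, `1 + 3 = 4`, `2 + 2 = 4` are not monochromatic, `χ 1`, `χ 2`, `χ 4`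
are pairwise distinct. If `x - 4` and `x - 2` both have color `χ 1`, then the absence of rainbow
solutions in `x = 2 + (x - 2) = 4 + (x - 4)` forces `χ x` into `{χ 1, χ 2} ∩ {χ 1, χ 4} = {χ 1}`.
So all odd numbers have color `χ 1`, and an even number, being the sum of two odd ones, does not.
-/

variable {M α : Type*}

/-- A Gallai–Schur coloring of a set `s`: no solution of `a + b = c` inside `s` is monochromatic
or rainbow. Both conditions are phrased as restrictions on the color of the sum `a + b`, the form
in which they propagate colors. Unlike in `StrongGS`, the set of colors is not prescribed. -/
structure GallaiSchurOn [Add M] (χ : M → α) (s : Set M) : Prop where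
  apply_add_ne : ∀ ⦃a⦄, a ∈ s → ∀ ⦃b⦄, b ∈ s → a + b ∈ s → χ a = χ b → χ (a + b) ≠ χ a
  apply_add_eq_or_eq : ∀ ⦃a⦄, a ∈ s → ∀ ⦃b⦄, b ∈ s → a + b ∈ s → χ a ≠ χ b →
    χ (a + b) = χ a ∨ χ (a + b) = χ b

theorem StrongGS.gallaiSchurOn {m : ℕ} {C : Finset ℕ} {χ : ℕ → ℕ} (h : StrongGS m C χ) :
    GallaiSchurOn χ (Set.Icc 1 m) := by
  obtain ⟨-, -, not_mono, not_rainbow⟩ := h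
  simp only [Finset.mem_Icc] at not_mono not_rainbow
  refine ⟨fun a ha b hb hab heq hsum ↦ ?_, fun a ha b hb hab hne ↦ ?_⟩
  · exact not_mono a ha b hb (a + b) hab rfl ⟨heq, (hsum.trans heq).symm⟩
  · by_contra! hsum
    exact not_rainbow a ha b hb (a + b) hab rfl ⟨hne, hsum.1.symm, hsum.2.symm⟩

namespace GallaiSchurOn

theorem apply_add_eq_of_add_eq_add [Add M] {χ : M → α} {s : Set M} (h : GallaiSchurOn χ s)
    {a b x y : M} (ha : a ∈ s) (hb : b ∈ s) (hx : x ∈ s) (hy : y ∈ s) (hax : a + x ∈ s)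
    (hsum : a + x = b + y) (hxy : χ x = χ y) (hab : χ a ≠ χ b) (hne_a : χ a ≠ χ x)
    (hne_b : χ b ≠ χ y) : χ (a + x) = χ x := by
  rcases h.apply_add_eq_or_eq ha hx hax hne_a with hsum_a | hsum_x
  · rcases h.apply_add_eq_or_eq hb hy (hsum ▸ hax) hne_b with hsum_b | hsum_y
    · exact absurd (hsum_a.symm.trans ((congrArg χ hsum).trans hsum_b)) hab
    · rw [hsum, hsum_y, hxy]
  · exact hsum_x

variable {m : ℕ} {χ : ℕ → α}

theorem apply_two_mul_add_one (h : GallaiSchurOn χ (Set.Icc 1 m)) (h31 : χ 3 = χ 1) :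
    ∀ k, 2 * k + 1 ≤ m → χ (2 * k + 1) = χ 1
  | 0, _ => rfl
  | 1, _ => h31
  | k + 2, hk => by
    have one_mem : 1 ∈ Set.Icc 1 m := ⟨by lia, by lia⟩
    have two_mem : 2 ∈ Set.Icc 1 m := ⟨by lia, by lia⟩
    have three_mem : 3 ∈ Set.Icc 1 m := ⟨by lia, by lia⟩
    have four_mem : 4 ∈ Set.Icc 1 m := ⟨by lia, by lia⟩
    have h21 : χ 2 ≠ χ 1 := h.apply_add_ne one_mem one_mem two_mem rfl
    have h41 : χ 4 ≠ χ 1 := h.apply_add_ne one_mem three_mem four_mem h31.symm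
    have h42 : χ 4 ≠ χ 2 := h.apply_add_ne two_mem two_mem four_mem rfl
    have color_sub_four : χ (2 * k + 1) = χ 1 := h.apply_two_mul_add_one h31 k (by lia)
    have color_sub_two : χ (2 * k + 3) = χ 1 := h.apply_two_mul_add_one h31 (k + 1) (by lia)
    have sum_eq : 2 + (2 * k + 3) = 4 + (2 * k + 1) := by ring
    calc χ (2 * (k + 2) + 1)
      _ = χ (2 + (2 * k + 3)) := by congr 1; ring
      _ = χ (2 * k + 3) :=
        h.apply_add_eq_of_add_eq_add two_mem four_mem ⟨by lia, by lia⟩ ⟨by lia, by lia⟩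
          ⟨by lia, by lia⟩ sum_eq (color_sub_two.trans color_sub_four.symm) h42.symm
          (color_sub_two ▸ h21) (color_sub_four ▸ h41)
      _ = χ 1 := color_sub_two

end GallaiSchurOn

theorem strong_period_two_general {m : ℕ} {χ : ℕ → α} (h : GallaiSchurOn χ (Set.Icc 1 m))
    (h31 : χ 3 = χ 1) :
    ∀ x ∈ Set.Icc 1 m, (Odd x → χ x = χ 1) ∧ (Even x → χ x ≠ χ 1) := by
  have odd_color {x : ℕ} (hx : x ≤ m) (hodd : Odd x) : χ x = χ 1 := by
    obtain ⟨k, rfl⟩ := hodd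
    exact h.apply_two_mul_add_one h31 k hx
  rintro x ⟨hpos, hle⟩
  refine ⟨odd_color hle, fun heven ↦ ?_⟩
  obtain ⟨y, rfl⟩ := Nat.exists_eq_add_of_le hpos
  have hy : Odd y := by grind
  exact h.apply_add_ne ⟨le_rfl, hpos.trans hle⟩ ⟨hy.pos, by lia⟩ ⟨hpos, hle⟩
    (odd_color (by lia) hy).symm

/-- Let `r > 3` and let `χ` be a strong Gallai–Schur `r`-coloring of `[1, m]`
with `m ≥ 3` and `χ 3 = χ 1`.  Then every odd `x ∈ [1, m]` satisfies
`χ x = χ 1`, and every even `x ∈ [1, m]` satisfies `χ x ≠ χ 1`. -/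
theorem strong_period_two (m r : ℕ) (hr : 3 < r) (hm : 3 ≤ m) (χ : ℕ → ℕ)
    (h : StrongGS m (Finset.Icc 1 r) χ) (h31 : χ 3 = χ 1) :
    ∀ x ∈ Finset.Icc 1 m, (Odd x → χ x = χ 1) ∧ (Even x → χ x ≠ χ 1) := by
  exact fun x hx ↦ strong_period_two_general h.gallaiSchurOn h31 x (Finset.mem_Icc.mp hx)
end

section
/- For every odd positive integer r, there exists a strong Gallai-Schur r-coloring of [1, 2·5^((r−1)/2) − 1], and for every m ≥ 2·5^((r−1)/2) there is no strong Gallai-Schur r-coloring of [1, m]. Equivalently, the strong Gallai-Schur number GS(r) equals 2·5^((r−1)/2) for odd r. -/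
/-- The strong Gallai–Schur number `GS r`: the least `n` such that no strong
Gallai–Schur `r`-coloring of `[1, m]` exists for any `m ≥ n`. -/
noncomputable def GS (r : ℕ) : ℕ :=
  sInf {n : ℕ | ∀ m, n ≤ m → ∀ χ : ℕ → ℕ, ¬ StrongGS m (Finset.Icc 1 r) χ}

/-!
Colouring the edge `xy` of the complete graph on `{0, …, m}` with `χ |x - y|` turns a strong
Gallai–Schur colouring into an edge colouring without rainbow and monochromatic triangles. By
Gallai's theorem the vertices can be partitioned so that only two colours occur between the parts
and each pair of parts is joined by one colour. If some part sees only one colour from outside, then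
neither that part nor its complement contains this colour, which bounds the order by twice the bound
for one colour less. Otherwise both colours are missing inside every part, and there are at most
five parts because `R(3, 3) = 6`, which costs a factor `5` for two colours.

Conversely, a colouring of `[1, m]` is transported to the multiples of `5` in `[1, 5m + 4]`, and the
sum-free residue classes `±1` and `±2` modulo `5` receive one new colour each.
-/

section GallaiPartition

variable {V K : Type*} {c : V → V → K} {S T : Set V} {D : Set K} {R : Setoid V} {v : V}

/-- A Gallai colouring of the complete graph on `S`: the edge `xy` has colour `c x y`, and no
triangle is rainbow. Values on the diagonal are irrelevant. -/
structure IsGallaiColoring (c : V → V → K) (S : Set V) : Prop where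
  symm : ∀ x ∈ S, ∀ y ∈ S, c x y = c y x
  noRainbow : ∀ x ∈ S, ∀ y ∈ S, ∀ z ∈ S, x ≠ y → x ≠ z → y ≠ z →
    c x y = c x z ∨ c x y = c y z ∨ c x z = c y z

lemma IsGallaiColoring.mono (hc : IsGallaiColoring c S) (hTS : T ⊆ S) : IsGallaiColoring c T where
  symm x hx y hy := hc.symm x (hTS hx) y (hTS hy)
  noRainbow x hx y hy z hz := hc.noRainbow x (hTS hx) y (hTS hy) z (hTS hz)

/-- A Gallai partition of `S`, given by an equivalence relation `R`: there are at least two classes,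
and the edges between two distinct classes all have the same colour, which lies in `D`. Gallai's
theorem is about `D` with at most two elements. -/
structure IsGallaiPartition (c : V → V → K) (S : Set V) (D : Set K) (R : Setoid V) : Prop where
  exists_not_rel : ∃ a ∈ S, ∃ b ∈ S, ¬ R a b
  color_mem : ∀ x ∈ S, ∀ y ∈ S, ¬ R x y → c x y ∈ D
  color_congr : ∀ x ∈ S, ∀ x' ∈ S, ∀ y ∈ S, R x x' → ¬ R x y → c x y = c x' y

lemma ne_of_not_rel {x y : V} (hxy : ¬ R x y) : x ≠ y := by
  rintro rfl
  exact hxy (R.refl' x)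

lemma IsGallaiPartition.exists_not_rel_left (hP : IsGallaiPartition c S D R) (x : V) :
    ∃ y ∈ S, ¬ R x y := by
  obtain ⟨a, ha, b, hb, hab⟩ := hP.exists_not_rel
  by_cases hxa : R x a
  · exact ⟨b, hb, fun hxb => hab (R.trans' (R.symm' hxa) hxb)⟩
  · exact ⟨a, ha, hxa⟩

/-- The partition of `S` into the connected components of the graph formed by the edges whose
colour is not in `D`. -/
def componentSetoid (c : V → V → K) (S : Set V) (D : Set K) : Setoid V :=
  Relation.EqvGen.setoid fun x y => x ∈ S ∧ y ∈ S ∧ c x y ∉ D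

lemma color_mem_of_not_componentSetoid {x y : V} (hx : x ∈ S) (hy : y ∈ S)
    (hxy : ¬ componentSetoid c S D x y) : c x y ∈ D := by
  by_contra hD
  exact hxy (.rel x y ⟨hx, hy, hD⟩)

lemma IsGallaiColoring.color_congr_componentSetoid (hc : IsGallaiColoring c S) {x x' y : V}
    (hxx' : componentSetoid c S D x x') (hy : y ∈ S) (hxy : ¬ componentSetoid c S D x y) :
    c x y = c x' y := by
  induction hxx' with
  | rel x x' h =>
    have hx'y : ¬ componentSetoid c S D x' y := fun h' => hxy (.trans _ _ _ (.rel _ _ h) h')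
    obtain ⟨hx, hx', hD⟩ := h
    have hxyD := color_mem_of_not_componentSetoid hx hy hxy
    have hx'yD := color_mem_of_not_componentSetoid hx' hy hx'y
    rcases eq_or_ne x x' with rfl | hne
    · rfl
    · have := hc.noRainbow x hx x' hx' y hy hne (ne_of_not_rel hxy) (ne_of_not_rel hx'y)
      grind
  | refl => rfl
  | symm x x' h ih => exact (ih fun h' => hxy (.trans _ _ _ (.symm _ _ h) h')).symm
  | trans x z x' h _ ih₁ ih₂ =>
    exact (ih₁ hxy).trans (ih₂ fun h' => hxy (.trans _ _ _ h h'))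

lemma IsGallaiColoring.exists_partition_of_cut (hc : IsGallaiColoring c S) (hTS : T ⊆ S)
    (hT : T.Nonempty) (hT' : (S \ T).Nonempty) (hcut : ∀ x ∈ T, ∀ y ∈ S \ T, c x y ∈ D) :
    ∃ R, IsGallaiPartition c S D R := by
  have mem_iff : ∀ x y, componentSetoid c S D x y → (x ∈ T ↔ y ∈ T) := by
    intro x y h
    induction h with
    | rel x y h =>
      obtain ⟨hx, hy, hD⟩ := h
      constructor
      · intro hxT
        by_contra hyT
        exact hD (hcut x hxT y ⟨hy, hyT⟩)
      · intro hyT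
        by_contra hxT
        exact hD (hc.symm x hx y hy ▸ hcut y hyT x ⟨hx, hxT⟩)
    | refl => rfl
    | symm _ _ _ ih => exact ih.symm
    | trans _ _ _ _ _ ih₁ ih₂ => exact ih₁.trans ih₂
  obtain ⟨a, ha⟩ := hT
  obtain ⟨b, hb, hbT⟩ := hT'
  exact ⟨componentSetoid c S D, ⟨a, hTS ha, b, hb, fun h => hbT ((mem_iff a b h).1 ha)⟩,
    fun _ hx _ hy => color_mem_of_not_componentSetoid hx hy,
    fun _ _ _ _ _ hy h => hc.color_congr_componentSetoid h hy⟩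

lemma IsGallaiColoring.exists_partition_of_forall_color_mem (hc : IsGallaiColoring c (insert v S))
    (hv : v ∉ S) (hS : S.Nonempty) (hvD : ∀ y ∈ S, c v y ∈ D) :
    ∃ R, IsGallaiPartition c (insert v S) D R := by
  have hdiff : insert v S \ {v} = S := by simp [hv]
  refine hc.exists_partition_of_cut (T := {v}) (by simp) (Set.singleton_nonempty v) ?_ ?_
  · rwa [hdiff]
  · rintro x rfl y hy
    exact hvD y (hdiff ▸ hy)

namespace IsGallaiPartition

lemma exists_partition_insert_of_class (hP : IsGallaiPartition c S D R)
    (hc : IsGallaiColoring c (insert v S)) (hv : v ∉ S) {a : V} (ha : a ∈ S)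
    (hvD : ∀ u ∈ S, R a u → c v u ∈ D) : ∃ R', IsGallaiPartition c (insert v S) D R' := by
  refine hc.exists_partition_of_cut (T := {x ∈ S | R a x}) ?_ ⟨a, ha, R.refl' a⟩
    ⟨v, .inl rfl, fun h => hv h.1⟩ ?_
  · exact fun x hx => .inr hx.1
  · rintro x ⟨hx, hax⟩ y ⟨rfl | hy, hyT⟩
    · exact hc.symm _ (.inl rfl) _ (.inr hx) ▸ hvD x hx hax
    · exact hP.color_mem x hx y hy fun hxy => hyT ⟨hy, R.trans' hax hxy⟩

lemma color_eq_of_notMem (hP : IsGallaiPartition c S D R)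
    (hc : IsGallaiColoring c (insert v S)) (hv : v ∉ S)
    (hout : ∀ x ∈ S, ∃ u ∈ S, R x u ∧ c v u ∉ D) {x y : V} (hx : x ∈ S) (hy : y ∈ S)
    (hxD : c v x ∉ D) (hyD : c v y ∉ D) : c v x = c v y := by
  have eq_of_not_rel : ∀ p ∈ S, ∀ q ∈ S, ¬ R p q → c v p ∉ D → c v q ∉ D → c v p = c v q := by
    intro p hp q hq hpq hpD hqD
    have hpqD := hP.color_mem p hp q hq hpq
    have := hc.noRainbow v (.inl rfl) p (.inr hp) q (.inr hq)
      (ne_of_mem_of_not_mem hp hv).symm (ne_of_mem_of_not_mem hq hv).symm (ne_of_not_rel hpq)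
    grind
  by_cases hxy : R x y
  · obtain ⟨z, hz, hxz⟩ := hP.exists_not_rel_left x
    obtain ⟨u, hu, hzu, huD⟩ := hout z hz
    have hxu : ¬ R x u := fun h => hxz (R.trans' h (R.symm' hzu))
    have huy : ¬ R u y := fun h => hxu (R.trans' hxy (R.symm' h))
    exact (eq_of_not_rel x hx u hu hxu hxD huD).trans (eq_of_not_rel u hu y hy huy huD hyD)
  · exact eq_of_not_rel x hx y hy hxy hxD hyD

lemma color_eq_of_mem_of_not_rel (hP : IsGallaiPartition c S D R)
    (hc : IsGallaiColoring c (insert v S)) (hv : v ∉ S)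
    (hout : ∀ x ∈ S, ∃ u ∈ S, R x u ∧ c v u ∉ D) {w y : V} (hw : w ∈ S) (hwD : c v w ∈ D)
    (hy : y ∈ S) (hwy : ¬ R w y) : c v w = c w y := by
  obtain ⟨u, hu, hyu, huD⟩ := hout y hy
  have hwu : ¬ R w u := fun h => hwy (R.trans' h (R.symm' hyu))
  have hwuD := hP.color_mem w hw u hu hwu
  have hvwu : c v w = c w u := by
    have := hc.noRainbow v (.inl rfl) w (.inr hw) u (.inr hu)
      (ne_of_mem_of_not_mem hw hv).symm (ne_of_mem_of_not_mem hu hv).symm (ne_of_not_rel hwu)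
    grind
  calc c v w = c w u := hvwu
    _ = c u w := hc.symm w (.inr hw) u (.inr hu)
    _ = c y w := hP.color_congr u hu y hy w hw (R.symm' hyu) fun h => hwu (R.symm' h)
    _ = c w y := hc.symm y (.inr hy) w (.inr hw)

lemma color_eq_of_mem (hP : IsGallaiPartition c S D R)
    (hc : IsGallaiColoring c (insert v S)) (hv : v ∉ S)
    (hout : ∀ x ∈ S, ∃ u ∈ S, R x u ∧ c v u ∉ D) {x y : V} (hx : x ∈ S) (hy : y ∈ S)
    (hxD : c v x ∈ D) (hyD : c v y ∈ D) : c v x = c v y := by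
  by_cases hxy : R x y
  · obtain ⟨z, hz, hxz⟩ := hP.exists_not_rel_left x
    have hyz : ¬ R y z := fun h => hxz (R.trans' hxy h)
    calc c v x = c x z := hP.color_eq_of_mem_of_not_rel hc hv hout hx hxD hz hxz
      _ = c y z := hP.color_congr x hx y hy z hz hxy hxz
      _ = c v y := (hP.color_eq_of_mem_of_not_rel hc hv hout hy hyD hz hyz).symm
  · calc c v x = c x y := hP.color_eq_of_mem_of_not_rel hc hv hout hx hxD hy hxy
      _ = c y x := hc.symm x (.inr hx) y (.inr hy)
      _ = c v y := (hP.color_eq_of_mem_of_not_rel hc hv hout hy hyD hx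
        fun h => hxy (R.symm' h)).symm

lemma exists_pair_of_forall_class (hP : IsGallaiPartition c S D R)
    (hc : IsGallaiColoring c (insert v S)) (hv : v ∉ S)
    (hout : ∀ x ∈ S, ∃ u ∈ S, R x u ∧ c v u ∉ D) :
    ∃ i j, ∀ y ∈ S, c v y ∈ ({i, j} : Set K) := by
  obtain ⟨a, ha, -⟩ := hP.exists_not_rel
  obtain ⟨u, hu, -, huD⟩ := hout a ha
  by_cases hin : ∃ w ∈ S, c v w ∈ D
  · obtain ⟨w, hw, hwD⟩ := hin
    refine ⟨c v w, c v u, fun y hy => ?_⟩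
    by_cases hyD : c v y ∈ D
    · exact .inl (hP.color_eq_of_mem hc hv hout hy hw hyD hwD)
    · exact .inr (hP.color_eq_of_notMem hc hv hout hy hu hyD huD)
  · push Not at hin
    exact ⟨c v u, c v u, fun y hy => .inl (hP.color_eq_of_notMem hc hv hout hy hu (hin y hy) huD)⟩

end IsGallaiPartition

theorem IsGallaiColoring.exists_partition (hS : S.Finite) (hc : IsGallaiColoring c S)
    (hnt : S.Nontrivial) : ∃ i j R, IsGallaiPartition c S {i, j} R := by
  induction S, hS using Set.Finite.induction_on with
  | empty => exact absurd hnt Set.not_nontrivial_empty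
  | @insert v S hv _ ih =>
    rcases S.subsingleton_or_nontrivial with hS | hS
    · obtain ⟨u, hu, huv⟩ := hnt.exists_ne v
      have hu : u ∈ S := hu.resolve_left huv
      exact ⟨c v u, c v u, hc.exists_partition_of_forall_color_mem hv ⟨u, hu⟩
        fun y hy => .inl (hS hy hu ▸ rfl)⟩
    · obtain ⟨i, j, R, hP⟩ := ih (hc.mono (Set.subset_insert v S)) hS
      by_cases hout : ∀ x ∈ S, ∃ u ∈ S, R x u ∧ c v u ∉ ({i, j} : Set K)
      · obtain ⟨k, l, hkl⟩ := hP.exists_pair_of_forall_class hc hv hout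
        exact ⟨k, l, hc.exists_partition_of_forall_color_mem hv hS.nonempty hkl⟩
      · push Not at hout
        obtain ⟨a, ha, haD⟩ := hout
        exact ⟨i, j, hP.exists_partition_insert_of_class hc hv ha haD⟩

end GallaiPartition

section Bound

variable {V K : Type*} {c : V → V → K} {S T : Set V} {D : Set K} {R : Setoid V} {M : ℕ∞}

/-- No triangle with vertices in `S` is monochromatic under the edge colouring `c`. -/
def NoMonoTriangle (c : V → V → K) (S : Set V) : Prop :=
  ∀ x ∈ S, ∀ y ∈ S, ∀ z ∈ S, x ≠ y → x ≠ z → y ≠ z → ¬ (c x y = c x z ∧ c x y = c y z)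

lemma NoMonoTriangle.mono (hm : NoMonoTriangle c S) (hTS : T ⊆ S) : NoMonoTriangle c T :=
  fun x hx y hy z hz => hm x (hTS hx) y (hTS hy) z (hTS hz)

lemma encard_le_encard_rel_add_encard_not_rel (S : Set V) (R : Setoid V) (x : V) :
    S.encard ≤ {y ∈ S | R x y}.encard + {y ∈ S | ¬ R x y}.encard := by
  rw [← Set.encard_union_eq (by grind)]
  exact Set.encard_le_encard fun y hy => by grind

lemma encard_le_two_mul_of_classes (hM : ∀ x ∈ S, {y ∈ S | R x y}.encard ≤ M)
    (htri : ∀ x ∈ S, ∀ y ∈ S, ∀ z ∈ S, R x y ∨ R x z ∨ R y z) : S.encard ≤ 2 * M := by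
  rcases S.eq_empty_or_nonempty with rfl | ⟨x, hx⟩
  · simp
  have hnot : {y ∈ S | ¬ R x y}.encard ≤ M := by
    rcases Set.eq_empty_or_nonempty {y ∈ S | ¬ R x y} with h | ⟨y, hy, hxy⟩
    · simp [h]
    · refine (Set.encard_le_encard ?_).trans (hM y hy)
      rintro z ⟨hz, hxz⟩
      exact ⟨hz, ((htri x hx y hy z hz).resolve_left hxy).resolve_left hxz⟩
  calc S.encard ≤ {y ∈ S | R x y}.encard + {y ∈ S | ¬ R x y}.encard :=
        encard_le_encard_rel_add_encard_not_rel S R x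
    _ ≤ M + M := add_le_add (hM x hx) hnot
    _ = 2 * M := (two_mul M).symm

namespace IsGallaiPartition

lemma one_color_or_two_colors {i j : K} (hP : IsGallaiPartition c S {i, j} R) :
    (∃ x ∈ S, ∃ l, ∀ y ∈ S, ¬ R x y → c x y = l) ∨
      i ≠ j ∧ ∀ x ∈ S, (∃ y ∈ S, ¬ R x y ∧ c x y = i) ∧ ∃ y ∈ S, ¬ R x y ∧ c x y = j := by
  refine or_iff_not_imp_left.2 fun hone => ?_
  push Not at hone
  have exists_both : ∀ x ∈ S, (∃ y ∈ S, ¬ R x y ∧ c x y = i) ∧ ∃ y ∈ S, ¬ R x y ∧ c x y = j := by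
    intro x hx
    obtain ⟨y, hy, hxy, hyj⟩ := hone x hx j
    obtain ⟨z, hz, hxz, hzi⟩ := hone x hx i
    exact ⟨⟨y, hy, hxy, (hP.color_mem x hx y hy hxy).resolve_right hyj⟩,
      ⟨z, hz, hxz, (hP.color_mem x hx z hz hxz).resolve_left hzi⟩⟩
  refine ⟨?_, exists_both⟩
  rintro rfl
  obtain ⟨a, ha, -⟩ := hP.exists_not_rel
  obtain ⟨y, hy, hay, hyi⟩ := hone a ha i
  exact hyi ((hP.color_mem a ha y hy hay).elim id id)

lemma class_pairwise_color_ne (hP : IsGallaiPartition c S D R) (hm : NoMonoTriangle c S) {x y : V}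
    (hx : x ∈ S) (hy : y ∈ S) (hxy : ¬ R x y) :
    {p ∈ S | R x p}.Pairwise fun p q => c p q ≠ c x y := by
  rintro p ⟨hp, hxp⟩ q ⟨hq, hxq⟩ hpq hcol
  have hpy : ¬ R p y := fun h => hxy (R.trans' hxp h)
  have hqy : ¬ R q y := fun h => hxy (R.trans' hxq h)
  exact hm p hp q hq y hy hpq (ne_of_not_rel hpy) (ne_of_not_rel hqy)
    ⟨hcol.trans (hP.color_congr x hx p hp y hy hxp hxy),
      hcol.trans (hP.color_congr x hx q hq y hy hxq hxy)⟩

lemma encard_le_two_mul (hP : IsGallaiPartition c S D R) (hm : NoMonoTriangle c S) {x : V} {l : K}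
    (hx : x ∈ S) (hl : ∀ y ∈ S, ¬ R x y → c x y = l)
    (hM : ∀ T ⊆ S, T.Pairwise (fun p q => c p q ≠ l) → T.encard ≤ M) : S.encard ≤ 2 * M := by
  have hin : {p ∈ S | R x p}.Pairwise fun p q => c p q ≠ l := by
    obtain ⟨y, hy, hxy⟩ := hP.exists_not_rel_left x
    exact hl y hy hxy ▸ hP.class_pairwise_color_ne hm hx hy hxy
  have hout : {p ∈ S | ¬ R x p}.Pairwise fun p q => c p q ≠ l := by
    rintro p ⟨hp, hxp⟩ q ⟨hq, hxq⟩ hpq hcol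
    have hxpl := hl p hp hxp
    exact hm x hx p hp q hq (ne_of_not_rel hxp) (ne_of_not_rel hxq) hpq
      ⟨hxpl.trans (hl q hq hxq).symm, hxpl.trans hcol.symm⟩
  calc S.encard ≤ {p ∈ S | R x p}.encard + {p ∈ S | ¬ R x p}.encard :=
        encard_le_encard_rel_add_encard_not_rel S R x
    _ ≤ M + M := add_le_add (hM _ (Set.sep_subset _ _) hin) (hM _ (Set.sep_subset _ _) hout)
    _ = 2 * M := (two_mul M).symm

lemma encard_neighbors_le {i j : K} (hP : IsGallaiPartition c S {i, j} R)
    (hm : NoMonoTriangle c S) (hM : ∀ x ∈ S, {y ∈ S | R x y}.encard ≤ M) {a : V} (ha : a ∈ S)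
    (l : K) : {y ∈ S | ¬ R a y ∧ c a y = l}.encard ≤ 2 * M := by
  refine encard_le_two_mul_of_classes (R := R) ?_ ?_
  · rintro x ⟨hx, -⟩
    refine (Set.encard_le_encard ?_).trans (hM x hx)
    exact fun y hy => ⟨hy.1.1, hy.2⟩
  · rintro x ⟨hx, hax, rfl⟩ y ⟨hy, hay, hayl⟩ z ⟨hz, haz, hazl⟩
    by_contra! ⟨hxy, hxz, hyz⟩
    have color_ne : ∀ p ∈ S, ∀ q ∈ S, ¬ R a p → ¬ R a q → ¬ R p q →
        c a p = c a x → c a q = c a x → c p q ≠ c a x := by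
      intro p hp q hq hap haq hpq hcp hcq hcol
      exact hm a ha p hp q hq (ne_of_not_rel hap) (ne_of_not_rel haq) (ne_of_not_rel hpq)
        ⟨hcp.trans hcq.symm, hcp.trans hcol.symm⟩
    have hxyl := color_ne x hx y hy hax hay hxy rfl hayl
    have hxzl := color_ne x hx z hz hax haz hxz rfl hazl
    have hyzl := color_ne y hy z hz hay haz hyz hayl hazl
    have hax' := hP.color_mem a ha x hx hax
    have hxy' := hP.color_mem x hx y hy hxy
    have hxz' := hP.color_mem x hx z hz hxz
    have hyz' := hP.color_mem y hy z hz hyz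
    have hxyz := hm x hx y hy z hz (ne_of_not_rel hxy) (ne_of_not_rel hxz) (ne_of_not_rel hyz)
    grind

lemma encard_le_five_mul {i j : K} (hP : IsGallaiPartition c S {i, j} R)
    (hm : NoMonoTriangle c S) (hM : ∀ x ∈ S, {y ∈ S | R x y}.encard ≤ M) : S.encard ≤ 5 * M := by
  obtain ⟨a, ha, -⟩ := hP.exists_not_rel
  let N : K → Set V := fun l => {y ∈ S | ¬ R a y ∧ c a y = l}
  have hcover : {y ∈ S | ¬ R a y} ⊆ N i ∪ N j := by
    rintro y ⟨hy, hay⟩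
    exact (hP.color_mem a ha y hy hay).elim (fun h => .inl ⟨hy, hay, h⟩)
      fun h => .inr ⟨hy, hay, h⟩
  calc S.encard ≤ {y ∈ S | R a y}.encard + {y ∈ S | ¬ R a y}.encard :=
        encard_le_encard_rel_add_encard_not_rel S R a
    _ ≤ M + (2 * M + 2 * M) := by
        refine add_le_add (hM a ha) ((Set.encard_le_encard hcover).trans ?_)
        exact (Set.encard_union_le _ _).trans
          (add_le_add (hP.encard_neighbors_le hm hM ha i) (hP.encard_neighbors_le hm hM ha j))
    _ = 5 * M := by ring

end IsGallaiPartition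

/-- The largest number of vertices of a complete graph whose edges can be coloured with `k` colours
without rainbow and monochromatic triangles: `5 ^ (k / 2)` for even `k` and `2 * 5 ^ ((k - 1) / 2)`
for odd `k`. -/
def gallaiOrder (k : ℕ) : ℕ := (k % 2 + 1) * 5 ^ (k / 2)

lemma gallaiOrder_pos (k : ℕ) : 0 < gallaiOrder k := by
  unfold gallaiOrder
  positivity

lemma gallaiOrder_add_two (k : ℕ) : gallaiOrder (k + 2) = 5 * gallaiOrder k := by
  simp only [gallaiOrder, Nat.add_mod_right, Nat.add_div_right k two_pos]
  ring

lemma two_mul_gallaiOrder_le (k : ℕ) : 2 * gallaiOrder k ≤ gallaiOrder (k + 1) := by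
  induction k using Nat.twoStepInduction with
  | zero => simp [gallaiOrder]
  | one => simp [gallaiOrder]
  | more k ih _ =>
    rw [gallaiOrder_add_two, show k + 2 + 1 = k + 1 + 2 from rfl, gallaiOrder_add_two]
    lia

lemma gallaiOrder_of_odd {k : ℕ} (hk : Odd k) : gallaiOrder k = 2 * 5 ^ ((k - 1) / 2) := by
  obtain ⟨n, rfl⟩ := hk
  simp [gallaiOrder, Nat.add_mod, Nat.add_div]

theorem IsGallaiColoring.encard_le_gallaiOrder (hc : IsGallaiColoring c S) (hm : NoMonoTriangle c S)
    (hS : S.Finite) {C : Finset K} (hC : S.Pairwise fun x y => c x y ∈ C) :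
    S.encard ≤ gallaiOrder C.card := by
  classical
  induction C using Finset.strongInduction generalizing S with
  | H C ih =>
  rcases S.subsingleton_or_nontrivial with hsub | hnt
  · exact (Set.encard_le_one_iff_subsingleton.2 hsub).trans (mod_cast gallaiOrder_pos _)
  obtain ⟨i, j, R, hP⟩ := hc.exists_partition hS hnt
  have bound_of_ssubset : ∀ D ⊂ C, ∀ T ⊆ S, T.Pairwise (fun x y => c x y ∈ D) →
      T.encard ≤ gallaiOrder D.card :=
    fun D hD T hT => ih D hD (hc.mono hT) (hm.mono hT) (hS.subset hT)
  have color_mem : ∀ x ∈ S, ∀ y ∈ S, ¬ R x y → c x y ∈ C :=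
    fun x hx y hy hxy => hC hx hy (ne_of_not_rel hxy)
  rcases hP.one_color_or_two_colors with ⟨x, hx, l, hl⟩ | ⟨hij, hboth⟩
  · obtain ⟨y, hy, hxy⟩ := hP.exists_not_rel_left x
    have hlC : l ∈ C := hl y hy hxy ▸ color_mem x hx y hy hxy
    have hS2 : S.encard ≤ 2 * gallaiOrder (C.erase l).card :=
      hP.encard_le_two_mul hm hx hl fun T hT hTl =>
        bound_of_ssubset _ (Finset.erase_ssubset hlC) T hT fun p hp q hq hpq =>
          Finset.mem_erase.2 ⟨hTl hp hq hpq, hC (hT hp) (hT hq) hpq⟩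
    rw [← Finset.card_erase_add_one hlC]
    exact hS2.trans (mod_cast two_mul_gallaiOrder_le _)
  · obtain ⟨a, ha, -⟩ := hP.exists_not_rel
    obtain ⟨⟨y, hy, hay, hyi⟩, z, hz, haz, hzj⟩ := hboth a ha
    have hiC : i ∈ C := hyi ▸ color_mem a ha y hy hay
    have hjC : j ∈ C.erase i := Finset.mem_erase.2 ⟨hij.symm, hzj ▸ color_mem a ha z hz haz⟩
    have hclass : ∀ x ∈ S, {p ∈ S | R x p}.encard ≤ gallaiOrder ((C.erase i).erase j).card := by
      intro x hx
      obtain ⟨⟨y, hy, hxy, rfl⟩, z, hz, hxz, rfl⟩ := hboth x hx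
      refine bound_of_ssubset _ ((Finset.erase_subset _ _).trans_ssubset (Finset.erase_ssubset hiC))
        _ (Set.sep_subset _ _) fun p hp q hq hpq => ?_
      exact Finset.mem_erase.2 ⟨hP.class_pairwise_color_ne hm hx hz hxz hp hq hpq,
        Finset.mem_erase.2 ⟨hP.class_pairwise_color_ne hm hx hy hxy hp hq hpq,
          hC hp.1 hq.1 hpq⟩⟩
    have hS5 := hP.encard_le_five_mul hm hclass
    rw [← Finset.card_erase_add_one hiC, ← Finset.card_erase_add_one hjC, gallaiOrder_add_two]
    exact_mod_cast hS5

end Bound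

/-- Exactly two of the three colours `i`, `j`, `k` coincide, in the form in which this condition
enters `StrongGS`. -/
def ExactlyTwoEqual {K : Type*} (i j k : K) : Prop :=
  ¬ (i = j ∧ j = k) ∧ ¬ (i ≠ j ∧ i ≠ k ∧ j ≠ k)

namespace StrongGS

variable {m : ℕ} {C : Finset ℕ} {χ : ℕ → ℕ}

lemma exactlyTwoEqual (hχ : StrongGS m C χ) {a b c : ℕ} (ha : a ∈ Finset.Icc 1 m)
    (hb : b ∈ Finset.Icc 1 m) (hc : c ∈ Finset.Icc 1 m) (habc : a + b = c) :
    ExactlyTwoEqual (χ a) (χ b) (χ c) :=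
  ⟨hχ.2.2.1 a ha b hb c hc habc, hχ.2.2.2 a ha b hb c hc habc⟩

lemma exactlyTwoEqual_dist (hχ : StrongGS m C χ) {x y z : ℕ} (hx : x ≤ m) (hy : y ≤ m)
    (hz : z ≤ m) (hxy : x ≠ y) (hxz : x ≠ z) (hyz : y ≠ z) :
    ExactlyTwoEqual (χ (x.dist y)) (χ (x.dist z)) (χ (y.dist z)) := by
  have dist_mem : ∀ {p q : ℕ}, p ≤ m → q ≤ m → p ≠ q → p.dist q ∈ Finset.Icc 1 m := by
    intro p q hp hq hpq
    simp only [Nat.dist, Finset.mem_Icc]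
    lia
  have hsum : x.dist y + x.dist z = y.dist z ∨ x.dist y + y.dist z = x.dist z ∨
      x.dist z + y.dist z = x.dist y := by
    simp only [Nat.dist]
    lia
  have hxy' := dist_mem hx hy hxy
  have hxz' := dist_mem hx hz hxz
  have hyz' := dist_mem hy hz hyz
  rcases hsum with h | h | h
  · exact hχ.exactlyTwoEqual hxy' hxz' hyz' h
  · grind [ExactlyTwoEqual, hχ.exactlyTwoEqual hxy' hyz' hxz' h]
  · grind [ExactlyTwoEqual, hχ.exactlyTwoEqual hxz' hyz' hxy' h]

theorem lt_gallaiOrder (hχ : StrongGS m C χ) : m < gallaiOrder C.card := by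
  let c : ℕ → ℕ → ℕ := fun x y => χ (x.dist y)
  have htri : ∀ x ∈ Set.Iic m, ∀ y ∈ Set.Iic m, ∀ z ∈ Set.Iic m, x ≠ y → x ≠ z → y ≠ z →
      ExactlyTwoEqual (c x y) (c x z) (c y z) :=
    fun x hx y hy z hz => hχ.exactlyTwoEqual_dist hx hy hz
  have hc : IsGallaiColoring c (Set.Iic m) := by
    refine ⟨fun x _ y _ => congrArg χ (Nat.dist_comm x y), ?_⟩
    intro x hx y hy z hz hxy hxz hyz
    have := (htri x hx y hy z hz hxy hxz hyz).2
    tauto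
  have hm : NoMonoTriangle c (Set.Iic m) := fun x hx y hy z hz hxy hxz hyz h =>
    (htri x hx y hy z hz hxy hxz hyz).1 ⟨h.1, h.1.symm.trans h.2⟩
  have hC : (Set.Iic m).Pairwise fun x y => c x y ∈ C := by
    intro x hx y hy hxy
    refine hχ.1 _ ?_
    simp only [Nat.dist, Finset.mem_Icc, Set.mem_Iic] at *
    lia
  have hcard : (Set.Iic m).encard = (m + 1 : ℕ) := by
    rw [← Finset.coe_Iic, Set.encard_coe_eq_coe_finsetCard, Nat.card_Iic]
  exact_mod_cast hcard ▸ hc.encard_le_gallaiOrder hm (Set.finite_Iic m) hC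

end StrongGS

section LowerBound

/-- The colouring that copies `χ` to the multiples of `5` and gives the other residues modulo `5`
the new colours `p` (for `±1`) and `q` (for `±2`). -/
def fivefoldColoring (χ : ℕ → ℕ) (p q x : ℕ) : ℕ :=
  if x % 5 = 0 then χ (x / 5) else if x % 5 = 1 ∨ x % 5 = 4 then p else q

variable {m p q : ℕ} {C : Finset ℕ} {χ : ℕ → ℕ}

lemma fivefoldColoring_five_mul (χ : ℕ → ℕ) (p q x : ℕ) :
    fivefoldColoring χ p q (5 * x) = χ x := by
  simp [fivefoldColoring]

lemma fivefoldColoring_cases (hmem : ∀ x ∈ Finset.Icc 1 m, χ x ∈ C) (p q : ℕ) {x : ℕ}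
    (hx : x ∈ Finset.Icc 1 (5 * m + 4)) :
    (∃ y ∈ Finset.Icc 1 m, x = 5 * y ∧ fivefoldColoring χ p q x ∈ C) ∨
      ((x % 5 = 1 ∨ x % 5 = 4) ∧ fivefoldColoring χ p q x = p) ∨
      ((x % 5 = 2 ∨ x % 5 = 3) ∧ fivefoldColoring χ p q x = q) := by
  by_cases h0 : x % 5 = 0
  · obtain ⟨y, rfl⟩ := Nat.dvd_of_mod_eq_zero h0
    have hy : y ∈ Finset.Icc 1 m := by
      simp only [Finset.mem_Icc] at *
      lia
    exact .inl ⟨y, hy, rfl, fivefoldColoring_five_mul χ p q y ▸ hmem y hy⟩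
  · by_cases h1 : x % 5 = 1 ∨ x % 5 = 4
    · exact .inr (.inl ⟨h1, by simp only [fivefoldColoring, if_neg h0, if_pos h1]⟩)
    · exact .inr (.inr ⟨by lia, by simp only [fivefoldColoring, if_neg h0, if_neg h1]⟩)

lemma StrongGS.exactlyTwoEqual_fivefoldColoring (hχ : StrongGS m C χ) (hp : p ∉ C) (hq : q ∉ C)
    (hpq : p ≠ q) {a b c : ℕ} (ha : a ∈ Finset.Icc 1 (5 * m + 4))
    (hb : b ∈ Finset.Icc 1 (5 * m + 4)) (hc : c ∈ Finset.Icc 1 (5 * m + 4)) (habc : a + b = c) :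
    ExactlyTwoEqual (fivefoldColoring χ p q a) (fivefoldColoring χ p q b)
      (fivefoldColoring χ p q c) := by
  have ne_new : ∀ i ∈ C, i ≠ p ∧ i ≠ q := fun i hi =>
    ⟨ne_of_mem_of_not_mem hi hp, ne_of_mem_of_not_mem hi hq⟩
  rcases fivefoldColoring_cases hχ.1 p q hc with ⟨c', hc', rfl, hcC⟩ | ⟨hcr, hcc⟩ | ⟨hcr, hcc⟩
  all_goals
    rcases fivefoldColoring_cases hχ.1 p q ha with ⟨a', ha', rfl, haC⟩ | ⟨har, hac⟩ | ⟨har, hac⟩ <;>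
    rcases fivefoldColoring_cases hχ.1 p q hb with ⟨b', hb', rfl, hbC⟩ | ⟨hbr, hbc⟩ | ⟨hbr, hbc⟩
  · simpa only [fivefoldColoring_five_mul] using hχ.exactlyTwoEqual ha' hb' hc' (by lia)
  -- Modulo 5, `±1 ± 1 ∈ {0, ±2}`, `±2 ± 2 ∈ {0, ±1}` and `±1 ± 2 ∈ {±1, ±2}`.
  all_goals first
    | lia
    | clear hχ ha hb hc; grind [ExactlyTwoEqual]

theorem StrongGS.strongGS_fivefoldColoring (hχ : StrongGS m C χ) (hp : p ∉ C) (hq : q ∉ C)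
    (hpq : p ≠ q) : StrongGS (5 * m + 4) (insert p (insert q C)) (fivefoldColoring χ p q) := by
  refine ⟨?_, ?_,
    fun _ ha _ hb _ hc h => (hχ.exactlyTwoEqual_fivefoldColoring hp hq hpq ha hb hc h).1,
    fun _ ha _ hb _ hc h => (hχ.exactlyTwoEqual_fivefoldColoring hp hq hpq ha hb hc h).2⟩
  · intro x hx
    rw [Finset.mem_insert, Finset.mem_insert]
    rcases fivefoldColoring_cases hχ.1 p q hx with ⟨-, -, -, h⟩ | ⟨-, h⟩ | ⟨-, h⟩
    · exact .inr (.inr h)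
    · exact .inl h
    · exact .inr (.inl h)
  · simp only [Finset.forall_mem_insert]
    refine ⟨⟨1, by simp, by simp [fivefoldColoring]⟩, ⟨2, by simp, by simp [fivefoldColoring]⟩, ?_⟩
    intro i hi
    obtain ⟨x, hx, rfl⟩ := hχ.2.1 i hi
    refine ⟨5 * x, ?_, fivefoldColoring_five_mul χ p q x⟩
    simp only [Finset.mem_Icc] at *
    lia

end LowerBound

theorem exists_strongGS (r : ℕ) : ∃ χ, StrongGS (gallaiOrder r - 1) (Finset.Icc 1 r) χ := by
  induction r using Nat.twoStepInduction with
  | zero => exact ⟨id, by simp [StrongGS, gallaiOrder]⟩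
  | one => exact ⟨fun _ => 1, by simp [StrongGS, gallaiOrder]⟩
  | more r ih _ =>
    obtain ⟨χ, hχ⟩ := ih
    have hlen : gallaiOrder (r + 2) - 1 = 5 * (gallaiOrder r - 1) + 4 := by
      have := gallaiOrder_pos r
      rw [gallaiOrder_add_two]
      lia
    have hcolors : Finset.Icc 1 (r + 2) = insert (r + 2) (insert (r + 1) (Finset.Icc 1 r)) := by
      ext x
      simp only [Finset.mem_insert, Finset.mem_Icc]
      lia
    rw [hlen, hcolors]
    exact ⟨_, hχ.strongGS_fivefoldColoring (by simp) (by simp) (by simp)⟩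

theorem strong_GS_odd_general (r : ℕ) :
    (∃ χ : ℕ → ℕ, StrongGS (gallaiOrder r - 1) (Finset.Icc 1 r) χ) ∧
    (∀ m, gallaiOrder r ≤ m → ∀ χ : ℕ → ℕ, ¬ StrongGS m (Finset.Icc 1 r) χ) ∧
    GS r = gallaiOrder r := by
  have hupper : ∀ m, gallaiOrder r ≤ m → ∀ χ : ℕ → ℕ, ¬ StrongGS m (Finset.Icc 1 r) χ := by
    intro m hm χ hχ
    have := hχ.lt_gallaiOrder
    rw [Nat.card_Icc, Nat.add_sub_cancel] at this
    exact this.not_ge hm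
  refine ⟨exists_strongGS r, hupper, IsLeast.csInf_eq ⟨hupper, fun n hn => ?_⟩⟩
  obtain ⟨χ, hχ⟩ := exists_strongGS r
  by_contra hlt
  exact hn (gallaiOrder r - 1) (by lia) χ hχ

/-- For every odd positive `r`, there is a strong Gallai–Schur `r`-coloring of
`[1, 2·5^((r-1)/2) - 1]`, no strong Gallai–Schur `r`-coloring of `[1, m]` exists
for any `m ≥ 2·5^((r-1)/2)`, and consequently `GS r = 2·5^((r-1)/2)`. -/
theorem strong_GS_odd (r : ℕ) (hr : 0 < r) (hro : Odd r) :
    (∃ χ : ℕ → ℕ, StrongGS (2 * 5 ^ ((r - 1) / 2) - 1) (Finset.Icc 1 r) χ) ∧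
    (∀ m, 2 * 5 ^ ((r - 1) / 2) ≤ m → ∀ χ : ℕ → ℕ, ¬ StrongGS m (Finset.Icc 1 r) χ) ∧
    GS r = 2 * 5 ^ ((r - 1) / 2) := by
  simpa only [gallaiOrder_of_odd hro] using strong_GS_odd_general r
end
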